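/- arXiv:2011.02393 — 5 statements merged into one kernel-verified Lean document; each statement's English description precedes it below -/
import Mathlib

section
/- For every integer w ≥ 3, ∑_{a+b=w, a≥2, b≥1} 2^{a−1} T(a,b) = (w−1)·( ζ(w) − ζ(w̄) ) = (w−1)·T(w). -/
open Filter

/-- Depth-1 Euler sum `ζ(s; e) = ∑_{n ≥ 1} eⁿ / nˢ`,
defined as the limit of partial sums. `e = 1` gives `ζ(s)`, `e = -1` gives `ζ(s̄)`. -/
noncomputable def eulerSum1 (s : ℕ) (e : ℝ) : ℝ :=
  limUnder atTop (fun N : ℕ =>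
    ∑ n ∈ Finset.Icc 1 N, e ^ n / (n : ℝ) ^ s)

/-- Depth-2 Euler sum `ζ(s₁, s₂; e₁, e₂) = ∑_{n₁ > n₂ ≥ 1} e₁^{n₁} e₂^{n₂} / (n₁^{s₁} n₂^{s₂})`,
defined as the limit of iterated partial sums. A bar over an argument means the
corresponding sign is `-1`. -/
noncomputable def eulerSum2 (s₁ s₂ : ℕ) (e₁ e₂ : ℝ) : ℝ :=
  limUnder atTop (fun N : ℕ =>
    ∑ n₁ ∈ Finset.Icc 1 N, ∑ n₂ ∈ Finset.Ico 1 n₁,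
      e₁ ^ n₁ * e₂ ^ n₂ / ((n₁ : ℝ) ^ s₁ * (n₂ : ℝ) ^ s₂))

/-- Depth-3 Euler sum
`ζ(s₁, s₂, s₃; e₁, e₂, e₃) = ∑_{n₁ > n₂ > n₃ ≥ 1} e₁^{n₁} e₂^{n₂} e₃^{n₃} / (n₁^{s₁} n₂^{s₂} n₃^{s₃})`. -/
noncomputable def eulerSum3 (s₁ s₂ s₃ : ℕ) (e₁ e₂ e₃ : ℝ) : ℝ :=
  limUnder atTop (fun N : ℕ =>
    ∑ n₁ ∈ Finset.Icc 1 N, ∑ n₂ ∈ Finset.Ico 1 n₁, ∑ n₃ ∈ Finset.Ico 1 n₂,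
      e₁ ^ n₁ * e₂ ^ n₂ * e₃ ^ n₃ / ((n₁ : ℝ) ^ s₁ * (n₂ : ℝ) ^ s₂ * (n₃ : ℝ) ^ s₃))

/-- Depth-1 multiple T-value `T(s) = 2 ∑_{m odd, m ≥ 1} 1 / mˢ`. -/
noncomputable def tValue1 (s : ℕ) : ℝ :=
  limUnder atTop (fun N : ℕ =>
    ∑ m ∈ Finset.Icc 1 N, if m % 2 = 1 then 2 / (m : ℝ) ^ s else 0)

/-- Depth-2 multiple T-value
`T(s₁, s₂) = ∑_{m₁ > m₂ > 0, m₁ even, m₂ odd} 4 / (m₁^{s₁} m₂^{s₂})`. -/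
noncomputable def tValue2 (s₁ s₂ : ℕ) : ℝ :=
  limUnder atTop (fun N : ℕ =>
    ∑ m₁ ∈ Finset.Icc 1 N, ∑ m₂ ∈ Finset.Ico 1 m₁,
      if m₁ % 2 = 0 ∧ m₂ % 2 = 1 then 4 / ((m₁ : ℝ) ^ s₁ * (m₂ : ℝ) ^ s₂) else 0)

/-- Depth-3 multiple T-value
`T(s₁, s₂, s₃) = ∑_{m₁ > m₂ > m₃ > 0, m₁ odd, m₂ even, m₃ odd} 8 / (m₁^{s₁} m₂^{s₂} m₃^{s₃})`. -/
noncomputable def tValue3 (s₁ s₂ s₃ : ℕ) : ℝ :=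
  limUnder atTop (fun N : ℕ =>
    ∑ m₁ ∈ Finset.Icc 1 N, ∑ m₂ ∈ Finset.Ico 1 m₁, ∑ m₃ ∈ Finset.Ico 1 m₂,
      if m₁ % 2 = 1 ∧ m₂ % 2 = 0 ∧ m₃ % 2 = 1 then
        8 / ((m₁ : ℝ) ^ s₁ * (m₂ : ℝ) ^ s₂ * (m₃ : ℝ) ^ s₃) else 0)

open Topology

section SeriesLimits

/-- The partial sums over `1, …, N` of a convergent series with vanishing zeroth term tend to its
sum. -/
lemma HasSum.tendsto_sum_Icc_one {u : ℕ → ℝ} {s : ℝ} (h : HasSum u s) (h0 : u 0 = 0) :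
    Tendsto (fun N : ℕ => ∑ n ∈ Finset.Icc 1 N, u n) atTop (𝓝 s) := by
  refine ((tendsto_add_atTop_iff_nat 1).2 h.tendsto_sum_nat).congr fun N => ?_
  rw [Finset.sum_range_succ', h0, add_zero, Finset.range_eq_Ico, Finset.sum_Ico_add' u 0 N 1]
  rfl

lemma hasSum_eulerSum1 {w : ℕ} (hw : 2 ≤ w) {e : ℝ} (he : |e| = 1) :
    HasSum (fun n : ℕ => e ^ n / (n : ℝ) ^ w) (eulerSum1 w e) := by
  have hs : Summable (fun n : ℕ => e ^ n / (n : ℝ) ^ w) := by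
    refine Summable.of_norm_bounded (Real.summable_one_div_nat_pow.2 (by omega : 1 < w)) fun n => ?_
    simp [he]
  have h0 : e ^ 0 / ((0 : ℕ) : ℝ) ^ w = 0 := by simp [show w ≠ 0 by omega]
  rw [eulerSum1, (hs.hasSum.tendsto_sum_Icc_one h0).limUnder_eq]
  exact hs.hasSum

lemma one_sub_neg_one_pow_div (w n : ℕ) :
    (1 : ℝ) ^ n / (n : ℝ) ^ w - (-1) ^ n / (n : ℝ) ^ w
      = if n % 2 = 1 then 2 / (n : ℝ) ^ w else 0 := by
  rcases Nat.even_or_odd n with h | h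
  · simp [h.neg_one_pow, Nat.even_iff.1 h]
  · rw [h.neg_one_pow, if_pos (Nat.odd_iff.1 h)]
    ring

lemma hasSum_eulerSum1_sub {w : ℕ} (hw : 2 ≤ w) :
    HasSum (fun n : ℕ => if n % 2 = 1 then 2 / (n : ℝ) ^ w else 0)
      (eulerSum1 w 1 - eulerSum1 w (-1)) := by
  simpa only [one_sub_neg_one_pow_div] using
    (hasSum_eulerSum1 hw (e := 1) (by simp)).sub (hasSum_eulerSum1 hw (e := -1) (by simp))

lemma tValue1_eq_eulerSum1_sub {w : ℕ} (hw : 2 ≤ w) :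
    tValue1 w = eulerSum1 w 1 - eulerSum1 w (-1) :=
  ((hasSum_eulerSum1_sub hw).tendsto_sum_Icc_one (by simp)).limUnder_eq

lemma hasSum_tValue1 {w : ℕ} (hw : 2 ≤ w) :
    HasSum (fun n : ℕ => if n % 2 = 1 then 2 / (n : ℝ) ^ w else 0) (tValue1 w) :=
  tValue1_eq_eulerSum1_sub hw ▸ hasSum_eulerSum1_sub hw

lemma hasSum_tValue1_odd {w : ℕ} (hw : 2 ≤ w) :
    HasSum (fun j : ℕ => 2 / (2 * (j : ℝ) + 1) ^ w) (tValue1 w) := by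
  have hinj : Function.Injective (fun j : ℕ => 2 * j + 1) := fun a b h => by
    simpa using h
  have h := (hinj.hasSum_iff (f := fun n : ℕ => if n % 2 = 1 then 2 / (n : ℝ) ^ w else 0)
    (a := tValue1 w) ?_).2 (hasSum_tValue1 hw)
  · refine h.congr_fun fun j => ?_
    simp [Nat.add_mod]
  · intro n hn
    refine if_neg fun hodd => hn ⟨n / 2, ?_⟩
    dsimp only
    omega

end SeriesLimits

section DoubleSeries

lemma one_div_mul_le_rpow {x y : ℝ} (hx : 0 < x) (hy : 0 < y) (hxy : x ≤ 4 * y ^ 2) :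
    1 / (x * y) ≤ 2 * x ^ (-(3 / 2) : ℝ) := by
  have hsq : √x ≤ 2 * y := Real.sqrt_le_iff.2 ⟨by positivity, by nlinarith⟩
  have hpow : x ^ (-(3 / 2) : ℝ) = 1 / (x * √x) := by
    rw [Real.rpow_neg hx.le, show (3 / 2 : ℝ) = 1 + 1 / 2 by norm_num, Real.rpow_add hx,
      Real.rpow_one, ← Real.sqrt_eq_rpow, one_div]
  have hs : 0 < √x := Real.sqrt_pos.2 hx
  rw [hpow, mul_one_div, div_le_div_iff₀ (by positivity) (by positivity)]
  nlinarith

lemma summable_odd_rpow : Summable (fun j : ℕ => (2 * (j : ℝ) + 1) ^ (-(3 / 2) : ℝ)) := by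
  have h := (Real.summable_nat_rpow (p := (-(3 / 2) : ℝ))).2 (by norm_num)
  have hinj : Function.Injective (fun j : ℕ => 2 * j + 1) := fun a b h => by
    simpa using h
  simpa [Function.comp_def] using h.comp_injective hinj

lemma summable_sum_range_one_div {a b : ℕ} (ha : 2 ≤ a) (hb : 1 ≤ b) :
    Summable (fun k : ℕ => ∑ j ∈ Finset.range k, 1 / ((k : ℝ) ^ a * (2 * (j : ℝ) + 1) ^ b)) := by
  have hk := (Real.summable_nat_rpow (p := (-(3 / 2) : ℝ))).2 (by norm_num)
  refine Summable.of_nonneg_of_le (fun k => by positivity) (fun k => ?_)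
    (hk.mul_right (2 * ∑' j : ℕ, (2 * (j : ℝ) + 1) ^ (-(3 / 2) : ℝ)))
  calc ∑ j ∈ Finset.range k, 1 / ((k : ℝ) ^ a * (2 * (j : ℝ) + 1) ^ b)
      ≤ ∑ j ∈ Finset.range k,
          (k : ℝ) ^ (-(3 / 2) : ℝ) * (2 * (2 * (j : ℝ) + 1) ^ (-(3 / 2) : ℝ)) := by
        refine Finset.sum_le_sum fun j hj => ?_
        have hjk : (j : ℝ) + 1 ≤ k := by exact_mod_cast Finset.mem_range.1 hj
        have hj0 : (0 : ℝ) ≤ j := j.cast_nonneg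
        have hk1 : (1 : ℝ) ≤ k := by linarith
        have hpow : (k : ℝ) * (2 * j + 1) * k ≤ (k : ℝ) ^ a * (2 * (j : ℝ) + 1) ^ b := by
          have h1 : (k : ℝ) ^ 2 ≤ (k : ℝ) ^ a := pow_le_pow_right₀ hk1 ha
          have h2 : (2 * (j : ℝ) + 1) ^ 1 ≤ (2 * (j : ℝ) + 1) ^ b :=
            pow_le_pow_right₀ (by linarith) hb
          calc (k : ℝ) * (2 * j + 1) * k = (k : ℝ) ^ 2 * (2 * (j : ℝ) + 1) ^ 1 := by ring
            _ ≤ _ := by gcongr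
        calc 1 / ((k : ℝ) ^ a * (2 * (j : ℝ) + 1) ^ b)
            ≤ 1 / ((k : ℝ) * (2 * j + 1) * k) := by gcongr
          _ ≤ 2 * ((k : ℝ) * (2 * j + 1)) ^ (-(3 / 2) : ℝ) :=
              one_div_mul_le_rpow (by positivity) (by linarith) (by nlinarith)
          _ = _ := by
              rw [Real.mul_rpow (by positivity) (by positivity)]
              ring
    _ ≤ _ := by
        rw [← Finset.mul_sum, ← Finset.mul_sum]
        gcongr
        exact summable_odd_rpow.sum_le_tsum _ fun j _ => by positivity

lemma sum_Ico_one_two_mul_odd (f : ℕ → ℝ) (k : ℕ) :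
    ∑ m ∈ Finset.Ico 1 (2 * k), (if m % 2 = 1 then f m else 0)
      = ∑ j ∈ Finset.range k, f (2 * j + 1) := by
  induction k with
  | zero => simp
  | succ k ih =>
    rw [Finset.sum_range_succ, ← ih]
    rcases k.eq_zero_or_pos with rfl | hk
    · simp
    · rw [show 2 * (k + 1) = 2 * k + 1 + 1 by ring, Finset.sum_Ico_succ_top (by omega),
        Finset.sum_Ico_succ_top (by omega)]
      simp [Nat.add_mod]

lemma hasSum_tValue2 {a b : ℕ} (ha : 2 ≤ a) (hb : 1 ≤ b) :
    HasSum (fun k : ℕ => ∑ j ∈ Finset.range k, 2 / ((k : ℝ) ^ a * (2 * (j : ℝ) + 1) ^ b))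
      (2 ^ (a - 1) * tValue2 a b) := by
  set u : ℕ → ℝ := fun m₁ => ∑ m₂ ∈ Finset.Ico 1 m₁,
      if m₁ % 2 = 0 ∧ m₂ % 2 = 1 then 4 / ((m₁ : ℝ) ^ a * (m₂ : ℝ) ^ b) else 0 with hu
  have hinj : Function.Injective (fun k : ℕ => 2 * k) := fun x y h => by simpa using h
  have hsupp : ∀ m ∉ Set.range (fun k : ℕ => 2 * k), u m = 0 := by
    intro m hm
    refine Finset.sum_eq_zero fun m₂ _ => if_neg fun h => hm ⟨m / 2, ?_⟩
    dsimp only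
    omega
  have heven : ∀ k : ℕ, 2 ^ (a - 1) * u (2 * k)
      = ∑ j ∈ Finset.range k, 2 / ((k : ℝ) ^ a * (2 * (j : ℝ) + 1) ^ b) := by
    intro k
    have h : u (2 * k) = ∑ j ∈ Finset.range k,
        4 / (((2 * k : ℕ) : ℝ) ^ a * ((2 * j + 1 : ℕ) : ℝ) ^ b) := by
      rw [← sum_Ico_one_two_mul_odd (fun m => 4 / (((2 * k : ℕ) : ℝ) ^ a * (m : ℝ) ^ b))]
      simp [hu]
    rw [h, Finset.mul_sum]
    refine Finset.sum_congr rfl fun j hj => ?_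
    have hk : (0 : ℝ) < k := by exact_mod_cast (Nat.zero_le j).trans_lt (Finset.mem_range.1 hj)
    obtain ⟨c, rfl⟩ : ∃ c, a = c + 1 := ⟨a - 1, by omega⟩
    push_cast
    rw [mul_pow]
    field_simp
    ring
  have hsum : Summable u := by
    rw [← hinj.summable_iff hsupp, ← summable_mul_left_iff (a := (2 : ℝ) ^ (a - 1)) (by positivity)]
    simp only [Function.comp_def, heven]
    refine ((summable_sum_range_one_div ha hb).mul_left 2).congr fun k => ?_
    rw [Finset.mul_sum]
    simp only [mul_one_div]
  have htend : tValue2 a b = ∑' m, u m :=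
    (hsum.hasSum.tendsto_sum_Icc_one (by simp [hu])).limUnder_eq
  have h := ((hinj.hasSum_iff hsupp).2 hsum.hasSum).mul_left ((2 : ℝ) ^ (a - 1))
  simp only [Function.comp_def, heven] at h
  rwa [htend]

end DoubleSeries

section PartialFractions

lemma sum_Icc_one_div_mul_sub {x y : ℝ} (hx : x ≠ 0) (hy : y ≠ 0) (p : ℕ) :
    x * (x - y) * ∑ a ∈ Finset.Icc 2 (p + 1), 1 / (x ^ a * y ^ (p + 2 - a))
      = 1 / y ^ p - 1 / x ^ p := by
  induction p with
  | zero => simp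
  | succ p ih =>
    have h : ∑ a ∈ Finset.Icc 2 (p + 1), 1 / (x ^ a * y ^ (p + 1 + 2 - a))
        = 1 / y * ∑ a ∈ Finset.Icc 2 (p + 1), 1 / (x ^ a * y ^ (p + 2 - a)) := by
      rw [Finset.mul_sum]
      refine Finset.sum_congr rfl fun a ha => ?_
      have := Finset.mem_Icc.1 ha
      rw [show p + 1 + 2 - a = p + 2 - a + 1 by omega, pow_succ]
      field_simp
    rw [Finset.sum_Icc_succ_top (by omega), h, mul_add, mul_left_comm, ih,
      show p + 1 + 2 - (p + 1 + 1) = 1 by omega]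
    field_simp
    ring

lemma sum_Icc_one_div_mul_self (x : ℝ) (p : ℕ) :
    ∑ a ∈ Finset.Icc 2 (p + 1), 1 / (x ^ a * x ^ (p + 2 - a)) = p / x ^ (p + 2) := by
  have h : ∀ a ∈ Finset.Icc 2 (p + 1), 1 / (x ^ a * x ^ (p + 2 - a)) = 1 / x ^ (p + 2) := by
    intro a ha
    have := Finset.mem_Icc.1 ha
    rw [← pow_add, show a + (p + 2 - a) = p + 2 by omega]
  rw [Finset.sum_congr rfl h]
  simp [div_eq_mul_inv]

/-- Splitting of the geometric sum; when `x = y` the last two terms vanish since `1 / 0 = 0`. -/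
lemma sum_Icc_one_div_eq {x y : ℝ} (hx : x ≠ 0) (hy : y ≠ 0) (p : ℕ) :
    ∑ a ∈ Finset.Icc 2 (p + 1), 1 / (x ^ a * y ^ (p + 2 - a))
      = (if x = y then p / x ^ (p + 2) else 0) + 1 / (y ^ p * (x * (x - y)))
        - 1 / (x ^ (p + 1)) * (1 / (x - y)) := by
  split_ifs with h
  · subst h
    rw [sum_Icc_one_div_mul_self]
    simp
  · have hxy : x - y ≠ 0 := sub_ne_zero.2 h
    have := sum_Icc_one_div_mul_sub hx hy p
    rw [mul_comm, ← eq_div_iff (by positivity)] at this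
    rw [this]
    field_simp
    ring

/-- The odd numbers below `2k` are symmetric about `k`. -/
lemma sum_range_one_div_sub_odd (k : ℕ) :
    ∑ j ∈ Finset.range k, 1 / ((k : ℝ) - (2 * (j : ℝ) + 1)) = 0 := by
  have h := Finset.sum_range_reflect (fun j : ℕ => 1 / ((k : ℝ) - (2 * (j : ℝ) + 1))) k
  have hneg : ∑ j ∈ Finset.range k, 1 / ((k : ℝ) - (2 * ((k - 1 - j : ℕ) : ℝ) + 1))
      = -∑ j ∈ Finset.range k, 1 / ((k : ℝ) - (2 * (j : ℝ) + 1)) := by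
    rw [← Finset.sum_neg_distrib]
    refine Finset.sum_congr rfl fun j hj => ?_
    have hj := Finset.mem_range.1 hj
    rw [Nat.sub_sub, Nat.cast_sub (by omega), ← one_div_neg_eq_neg_one_div]
    push_cast
    congr 1
    ring
  rw [hneg] at h
  linarith

lemma sum_range_ite_odd (k : ℕ) (c : ℝ) :
    ∑ j ∈ Finset.range k, (if (k : ℝ) = 2 * (j : ℝ) + 1 then c else 0)
      = if k % 2 = 1 then c else 0 := by
  have hcast : ∀ j : ℕ, (k : ℝ) = 2 * (j : ℝ) + 1 ↔ k = 2 * j + 1 := fun j => by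
    exact_mod_cast Iff.rfl
  simp only [hcast]
  split_ifs with hk
  · rw [Finset.sum_eq_single_of_mem (k / 2) (Finset.mem_range.2 (by omega)), if_pos (by omega)]
    intro j _ hj
    exact if_neg (by omega)
  · exact Finset.sum_eq_zero fun j _ => if_neg (by omega)

lemma sum_Icc_sum_range_eq (p k : ℕ) :
    ∑ a ∈ Finset.Icc 2 (p + 1), ∑ j ∈ Finset.range k,
        2 / ((k : ℝ) ^ a * (2 * (j : ℝ) + 1) ^ (p + 2 - a))
      = p * (if k % 2 = 1 then 2 / (k : ℝ) ^ (p + 2) else 0)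
        + 2 * ∑ j ∈ Finset.range k,
            1 / ((2 * (j : ℝ) + 1) ^ p * (k * (k - (2 * (j : ℝ) + 1)))) := by
  rcases k.eq_zero_or_pos with rfl | hk
  · simp
  have hk0 : (k : ℝ) ≠ 0 := by positivity
  have hterm : ∀ j : ℕ, ∑ a ∈ Finset.Icc 2 (p + 1),
      2 / ((k : ℝ) ^ a * (2 * (j : ℝ) + 1) ^ (p + 2 - a))
      = 2 * ((if (k : ℝ) = 2 * (j : ℝ) + 1 then p / (k : ℝ) ^ (p + 2) else 0)
        + 1 / ((2 * (j : ℝ) + 1) ^ p * (k * (k - (2 * (j : ℝ) + 1))))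
        - 1 / (k : ℝ) ^ (p + 1) * (1 / (k - (2 * (j : ℝ) + 1)))) := by
    intro j
    rw [← sum_Icc_one_div_eq hk0 (by positivity), Finset.mul_sum]
    simp only [mul_one_div]
  rw [Finset.sum_comm]
  simp only [hterm]
  rw [← Finset.mul_sum, Finset.sum_sub_distrib, Finset.sum_add_distrib, sum_range_ite_odd,
    ← Finset.mul_sum (a := 1 / (k : ℝ) ^ (p + 1)), sum_range_one_div_sub_odd]
  split_ifs <;> ring

end PartialFractions

section Interchange

lemma summable_partialFraction {p : ℕ} (hp : 1 ≤ p) :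
    Summable (fun q : ℕ × ℕ => if q.2 < q.1 then
      1 / ((2 * (q.2 : ℝ) + 1) ^ p * (q.1 * (q.1 - (2 * (q.2 : ℝ) + 1)))) else 0) := by
  have hint : Summable (fun l : ℤ => |(l : ℝ)| ^ (-(3 / 2) : ℝ)) :=
    Real.summable_abs_int_rpow (by norm_num)
  have hprod := (summable_odd_rpow.mul_of_nonneg hint (fun j => by positivity)
    (fun l => by positivity)).mul_left 2
  have hinj : Function.Injective
      (fun q : ℕ × ℕ => ((q.2, (q.1 : ℤ) - (2 * q.2 + 1)) : ℕ × ℤ)) := by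
    rintro ⟨k, j⟩ ⟨k', j'⟩ h
    simp only [Prod.mk.injEq] at h
    ext <;> simp <;> omega
  refine Summable.of_norm_bounded (hprod.comp_injective hinj) ?_
  rintro ⟨k, j⟩
  simp only [Function.comp_apply]
  push_cast
  set n : ℝ := 2 * (j : ℝ) + 1 with hn
  have hn1 : 1 ≤ n := by simp [hn]
  split_ifs with hjk
  swap
  · rw [norm_zero]
    positivity
  have hjk' : (j : ℝ) + 1 ≤ k := by exact_mod_cast hjk
  have hj0 : (0 : ℝ) ≤ j := j.cast_nonneg
  have hk : (0 : ℝ) < k := by linarith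
  rcases eq_or_ne ((k : ℝ) - n) 0 with h0 | h0
  · rw [h0]
    simp only [mul_zero, div_zero, norm_zero]
    positivity
  have hl : 0 < |(k : ℝ) - n| := abs_pos.2 h0
  have hlk : |(k : ℝ) - n| ≤ k := abs_le.2 ⟨by linarith, by linarith⟩
  rw [← Real.mul_rpow (by linarith) hl.le, norm_div, norm_one, norm_mul, norm_mul, norm_pow,
    Real.norm_eq_abs, Real.norm_eq_abs, Real.norm_eq_abs, abs_of_nonneg (by linarith : 0 ≤ n),
    abs_of_pos hk]
  have hpow : n ^ 1 ≤ n ^ p := pow_le_pow_right₀ hn1 hp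
  calc 1 / (n ^ p * (k * |(k : ℝ) - n|)) ≤ 1 / (n ^ 1 * (k * |(k : ℝ) - n|)) := by gcongr
    _ = 1 / (n * |(k : ℝ) - n| * k) := by ring
    _ ≤ _ := one_div_mul_le_rpow (by positivity) hk (by nlinarith)

lemma sum_range_partialFraction_lower (j : ℕ) :
    ∑ k ∈ Finset.range (2 * j + 1),
        (if j < k then 1 / ((k : ℝ) * (k - (2 * (j : ℝ) + 1))) else 0)
      = -(1 / (2 * (j : ℝ) + 1)) * ∑ i ∈ Finset.range (2 * j), 1 / ((i : ℝ) + 1) := by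
  have hlow : ∑ k ∈ Finset.range (j + 1),
      (if j < k then 1 / ((k : ℝ) * (k - (2 * (j : ℝ) + 1))) else 0) = 0 :=
    Finset.sum_eq_zero fun k hk => if_neg (by simpa [Nat.lt_succ_iff] using hk)
  have hrefl := Finset.sum_range_reflect (fun i : ℕ => 1 / ((i : ℝ) + 1)) j
  rw [show 2 * j + 1 = (j + 1) + j by ring, Finset.sum_range_add, hlow, zero_add,
    show 2 * j = j + j by ring, Finset.sum_range_add, ← hrefl, ← Finset.sum_add_distrib,
    Finset.mul_sum]
  refine Finset.sum_congr rfl fun i hi => ?_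
  have hij := Finset.mem_range.1 hi
  have hpos : (0 : ℝ) < j - i := sub_pos.2 (by exact_mod_cast hij)
  rw [if_pos (by omega), Nat.sub_sub, Nat.cast_sub (by omega)]
  push_cast
  have h1 : (j : ℝ) + 1 + i - (2 * j + 1) = -(j - i) := by ring
  have h2 : (j : ℝ) - (1 + i) + 1 = j - i := by ring
  rw [h1, h2]
  have h3 : (j : ℝ) + 1 + i ≠ 0 := by positivity
  have h4 : (j : ℝ) + i + 1 ≠ 0 := by positivity
  field_simp
  ring

lemma sum_range_partialFraction (j M : ℕ) :
    ∑ k ∈ Finset.range (M + (2 * j + 1 + 1)),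
        (if j < k then 1 / ((k : ℝ) * (k - (2 * (j : ℝ) + 1))) else 0)
      = 1 / (2 * (j : ℝ) + 1) *
        (1 / (2 * (j : ℝ) + 1) - ∑ i ∈ Finset.range (2 * j + 1), 1 / ((M : ℝ) + i + 1)) := by
  induction M with
  | zero =>
    rw [zero_add, Finset.sum_range_succ, sum_range_partialFraction_lower, Finset.sum_range_succ]
    simp
  | succ M ih =>
    have hshift : ∑ i ∈ Finset.range (2 * j + 1), 1 / (((M + 1 : ℕ) : ℝ) + i + 1)
        = ∑ i ∈ Finset.range (2 * j + 1), 1 / ((M : ℝ) + i + 1)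
          + 1 / ((M : ℝ) + (2 * j + 1) + 1) - 1 / ((M : ℝ) + 1) := by
      have h1 := Finset.sum_range_succ (fun i : ℕ => 1 / ((M : ℝ) + i + 1)) (2 * j + 1)
      have h2 := Finset.sum_range_succ' (fun i : ℕ => 1 / ((M : ℝ) + i + 1)) (2 * j + 1)
      rw [h1] at h2
      push_cast at h2 ⊢
      simp only [add_zero, add_assoc, add_comm, add_left_comm] at h2 ⊢
      linarith
    rw [show M + 1 + (2 * j + 1 + 1) = M + (2 * j + 1 + 1) + 1 by ring, Finset.sum_range_succ, ih,
      if_pos (by omega), hshift]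
    push_cast
    have h1 : (M : ℝ) + (2 * j + 1 + 1) - (2 * j + 1) = M + 1 := by ring
    rw [h1]
    field_simp
    ring

lemma tendsto_sum_range_partialFraction (j : ℕ) :
    Tendsto (fun N : ℕ => ∑ k ∈ Finset.range N,
        (if j < k then 1 / ((k : ℝ) * (k - (2 * (j : ℝ) + 1))) else 0))
      atTop (𝓝 (1 / (2 * (j : ℝ) + 1) ^ 2)) := by
  rw [← tendsto_add_atTop_iff_nat (2 * j + 1 + 1)]
  simp only [sum_range_partialFraction]
  have hzero : Tendsto (fun M : ℕ => ∑ i ∈ Finset.range (2 * j + 1), 1 / ((M : ℝ) + i + 1))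
      atTop (𝓝 (∑ i ∈ Finset.range (2 * j + 1), (0 : ℝ))) := by
    refine tendsto_finsetSum _ fun i _ => ?_
    have h := (tendsto_add_atTop_iff_nat i).2 (tendsto_one_div_add_atTop_nhds_zero_nat (𝕜 := ℝ))
    simpa using h
  have h := (hzero.const_sub (1 / (2 * (j : ℝ) + 1))).const_mul (1 / (2 * (j : ℝ) + 1))
  convert h using 2
  rw [Finset.sum_const_zero, sub_zero, one_div_mul_one_div, sq]

lemma hasSum_sum_range_partialFraction {p : ℕ} (hp : 1 ≤ p) :
    HasSum (fun k : ℕ => 2 * ∑ j ∈ Finset.range k,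
      1 / ((2 * (j : ℝ) + 1) ^ p * (k * (k - (2 * (j : ℝ) + 1))))) (tValue1 (p + 2)) := by
  have hs := summable_partialFraction hp
  have hcol : ∀ j : ℕ, HasSum (fun k : ℕ => if j < k then
      1 / ((2 * (j : ℝ) + 1) ^ p * (k * (k - (2 * (j : ℝ) + 1)))) else 0)
      (1 / (2 * (j : ℝ) + 1) ^ (p + 2)) := by
    intro j
    have hsum := hs.prod_symm.prod_factor j
    refine (hsum.hasSum_iff_tendsto_nat).2 ?_
    have h := (tendsto_sum_range_partialFraction j).const_mul (1 / (2 * (j : ℝ) + 1) ^ p)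
    rw [one_div_mul_one_div, ← pow_add] at h
    refine h.congr fun N => ?_
    rw [Finset.mul_sum]
    refine Finset.sum_congr rfl fun k _ => ?_
    simp only [Prod.swap]
    split_ifs
    · rw [one_div_mul_one_div]
    · rw [mul_zero]
  have hrow : ∀ k : ℕ, HasSum (fun j : ℕ => if j < k then
      1 / ((2 * (j : ℝ) + 1) ^ p * (k * (k - (2 * (j : ℝ) + 1)))) else 0)
      (∑ j ∈ Finset.range k, 1 / ((2 * (j : ℝ) + 1) ^ p * (k * (k - (2 * (j : ℝ) + 1))))) := by
    intro k
    rw [Finset.sum_congr rfl fun j hj => (if_pos (Finset.mem_range.1 hj)).symm]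
    exact hasSum_sum_of_ne_finset_zero fun j hj => if_neg (by simpa using hj)
  have htotal := (hs.prod_symm.hasSum.prod_fiberwise hcol).mul_left 2
  simp only [mul_one_div] at htotal
  rw [← htotal.unique (hasSum_tValue1_odd (by omega))]
  have hswap := (Equiv.prodComm ℕ ℕ).tsum_eq (fun q : ℕ × ℕ => if q.2 < q.1 then
      1 / ((2 * (q.2 : ℝ) + 1) ^ p * (q.1 * (q.1 - (2 * (q.2 : ℝ) + 1)))) else 0)
  have h := (hs.hasSum.prod_fiberwise hrow).mul_left 2
  rw [← hswap] at h
  exact h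

end Interchange

/-- Weighted sum formula for double T-values: for `w ≥ 3`,
`∑_{a+b=w, a≥2} 2^{a−1} T(a,b) = (w−1)(ζ(w) − ζ(w̄)) = (w−1) T(w)`. -/
theorem weighted_sum_double_T (w : ℕ) (hw : 3 ≤ w) :
    ∑ a ∈ Finset.Icc 2 (w - 1), (2 : ℝ) ^ (a - 1) * tValue2 a (w - a)
        = ((w : ℝ) - 1) * (eulerSum1 w 1 - eulerSum1 w (-1))
    ∧ ∑ a ∈ Finset.Icc 2 (w - 1), (2 : ℝ) ^ (a - 1) * tValue2 a (w - a)
        = ((w : ℝ) - 1) * tValue1 w := by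
  rw [← tValue1_eq_eulerSum1_sub (by omega), and_self]
  obtain ⟨p, rfl⟩ : ∃ p, w = p + 2 := ⟨w - 2, by omega⟩
  have hdouble : HasSum (fun k : ℕ => ∑ a ∈ Finset.Icc 2 (p + 1), ∑ j ∈ Finset.range k,
      2 / ((k : ℝ) ^ a * (2 * (j : ℝ) + 1) ^ (p + 2 - a)))
      (∑ a ∈ Finset.Icc 2 (p + 1), (2 : ℝ) ^ (a - 1) * tValue2 a (p + 2 - a)) := by
    refine hasSum_sum fun a ha => ?_
    have := Finset.mem_Icc.1 ha
    exact hasSum_tValue2 this.1 (by omega)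
  simp only [sum_Icc_sum_range_eq] at hdouble
  have hsingle := ((hasSum_tValue1 (w := p + 2) (by omega)).mul_left (p : ℝ)).add
    (hasSum_sum_range_partialFraction (p := p) (by omega))
  rw [show p + 2 - 1 = p + 1 by omega, hdouble.unique hsingle]
  push_cast
  ring
end

section
/- For every integer w ≥ 3, ∑_{a+b=w, a≥2, b≥1} 2^{a−1} ζ(a,b) = ((w+1)/2)·ζ(w). -/
open Filter

/-- The complete homogeneous symmetric polynomial of degree `n` in two variables. -/
noncomputable def homSum (n : ℕ) (u v : ℝ) : ℝ :=
  ∑ i ∈ Finset.range (n + 1), u ^ i * v ^ (n - i)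

lemma homSum_succ (n : ℕ) (u v : ℝ) :
    homSum (n + 1) u v = v ^ (n + 1) + u * homSum n u v := by
  unfold homSum
  rw [Finset.sum_range_succ', Finset.mul_sum, add_comm]
  congr 1
  · simp
  · refine Finset.sum_congr rfl fun i _ => ?_
    rw [Nat.add_sub_add_right]
    ring

lemma homSum_comm (n : ℕ) (u v : ℝ) : homSum n u v = homSum n v u := by
  unfold homSum
  rw [← Finset.sum_flip]
  refine Finset.sum_congr rfl fun i hi => ?_
  rw [Nat.sub_sub_self (Finset.mem_range_succ_iff.mp hi), mul_comm]

lemma homSum_succ_right (n : ℕ) (u v : ℝ) :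
    homSum (n + 1) u v = u ^ (n + 1) + v * homSum n u v := by
  rw [homSum_comm, homSum_succ, homSum_comm n u v]

lemma homSum_self (n : ℕ) (u : ℝ) : homSum n u u = (n + 1) * u ^ n := by
  induction n with
  | zero => simp [homSum]
  | succ n ih => rw [homSum_succ, ih]; push_cast; ring

lemma homSum_nonneg (n : ℕ) {u v : ℝ} (hu : 0 ≤ u) (hv : 0 ≤ v) : 0 ≤ homSum n u v :=
  Finset.sum_nonneg fun _ _ => by positivity

lemma sub_mul_homSum (n : ℕ) (u v : ℝ) :
    (v - u) * homSum n u v = v ^ (n + 1) - u ^ (n + 1) := by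
  linear_combination homSum_succ n u v - homSum_succ_right n u v

/-- Partial fractions: the hypothesis holds for `u = 1 / x`, `v = 1 / y`, `t = 1 / (x + y)`. -/
lemma mul_homSum_eq_sum (n : ℕ) {t u v : ℝ} (h : u * v = t * (u + v)) :
    u * v * homSum n u v =
      ∑ k ∈ Finset.range (n + 1), 2 ^ k * t ^ (k + 1) * (u ^ (n + 1 - k) + v ^ (n + 1 - k)) := by
  induction n with
  | zero => simpa [homSum] using h
  | succ n ih =>
    rw [Finset.sum_range_succ']
    have hstep : ∑ k ∈ Finset.range (n + 1), 2 ^ (k + 1) * t ^ (k + 1 + 1) *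
        (u ^ (n + 1 + 1 - (k + 1)) + v ^ (n + 1 + 1 - (k + 1))) =
        2 * t * (u * v * homSum n u v) := by
      rw [ih, Finset.mul_sum]
      refine Finset.sum_congr rfl fun k _ => ?_
      rw [Nat.add_sub_add_right]
      ring
    rw [hstep]
    simp only [pow_zero, zero_add, Nat.sub_zero]
    linear_combination homSum (n + 1) u v * h + t * u * homSum_succ_right n u v
      + t * v * homSum_succ n u v

/-- The sum of `1 / (p q ^ s)` over `p, q ≤ N` with `p + q > N`. -/
noncomputable def tailSum (s N : ℕ) : ℝ :=
  ∑ q ∈ Finset.Icc 1 N, ∑ p ∈ Finset.Ioc (N - q) N, (p : ℝ)⁻¹ * (q : ℝ)⁻¹ ^ s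

lemma sum_Ico_one_reflect (f : ℕ → ℝ) (n : ℕ) :
    ∑ q ∈ Finset.Ico 1 n, f (n - q) = ∑ q ∈ Finset.Ico 1 n, f q := by
  refine Finset.sum_nbij' (fun q => n - q) (fun q => n - q) ?_ ?_ ?_ ?_ ?_ <;>
    intro q hq <;> simp only [Finset.mem_Ico] at * <;> omega

lemma tailSum_succ (s N : ℕ) :
    tailSum s (N + 1) = tailSum s N
      + ∑ q ∈ Finset.Icc 1 N, (q : ℝ)⁻¹ ^ s * ((N + 1 : ℝ)⁻¹ - ((N + 1 - q : ℕ) : ℝ)⁻¹)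
      + ((N + 1 : ℕ) : ℝ)⁻¹ ^ s * ∑ p ∈ Finset.Icc 1 (N + 1), (p : ℝ)⁻¹ := by
  unfold tailSum
  rw [Finset.sum_Icc_succ_top (by omega), ← Finset.sum_add_distrib]
  congr 1
  · refine Finset.sum_congr rfl fun q hq => ?_
    have hq := Finset.mem_Icc.mp hq
    rw [Finset.sum_Ioc_succ_top (by omega), ← Finset.sum_Ioc_consecutive _
      (by omega : N - q ≤ N - q + 1) (by omega), Nat.Ioc_succ_singleton, Finset.sum_singleton,
      show N + 1 - q = N - q + 1 by omega]
    push_cast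
    ring
  · rw [Finset.mul_sum, Nat.sub_self]
    exact Finset.sum_congr rfl fun p _ => mul_comm _ _

lemma sum_homSum_add_tailSum (n N : ℕ) :
    (∑ p ∈ Finset.Icc 1 N, ∑ q ∈ Finset.Ico 1 p,
      (p : ℝ)⁻¹ ^ 2 * (q : ℝ)⁻¹ * homSum n (p : ℝ)⁻¹ (q : ℝ)⁻¹) + tailSum (n + 2) N =
      ∑ q ∈ Finset.Icc 1 N, (q : ℝ)⁻¹ ^ (n + 3) := by
  induction N with
  | zero => simp [tailSum]
  | succ N ih =>
    rw [Finset.sum_Icc_succ_top (by omega), Finset.sum_Icc_succ_top (by omega), tailSum_succ, ← ih,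
      Finset.sum_Icc_succ_top (by omega)]
    have hIcc : Finset.Icc 1 N = Finset.Ico 1 (N + 1) := by
      ext; simp only [Finset.mem_Icc, Finset.mem_Ico]; omega
    have hterm : ∑ q ∈ Finset.Ico 1 (N + 1), ((N + 1 : ℕ) : ℝ)⁻¹ ^ 2 * (q : ℝ)⁻¹ *
          homSum n ((N + 1 : ℕ) : ℝ)⁻¹ (q : ℝ)⁻¹ =
        -∑ q ∈ Finset.Icc 1 N, (q : ℝ)⁻¹ ^ (n + 2) *
            ((N + 1 : ℝ)⁻¹ - ((N + 1 - q : ℕ) : ℝ)⁻¹)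
          - ((N + 1 : ℕ) : ℝ)⁻¹ ^ (n + 2) * ∑ q ∈ Finset.Icc 1 N, (q : ℝ)⁻¹ := by
      rw [hIcc, ← sum_Ico_one_reflect (fun q => (q : ℝ)⁻¹), Finset.mul_sum,
        ← Finset.sum_neg_distrib, ← Finset.sum_sub_distrib]
      refine Finset.sum_congr rfl fun q hq => ?_
      have hq := Finset.mem_Ico.mp hq
      obtain ⟨d, hd, hN⟩ : ∃ d : ℕ, 0 < d ∧ N + 1 = q + d := ⟨N + 1 - q, by omega, by omega⟩
      have hN' : (N + 1 : ℝ) = q + d := by exact_mod_cast hN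
      rw [hN', hN, Nat.add_sub_cancel_left]
      push_cast
      have hq0 : (0 : ℝ) < q := by exact_mod_cast hq.1
      have hd0 : (0 : ℝ) < d := by exact_mod_cast hd
      have key := sub_mul_homSum n ((q : ℝ) + d)⁻¹ (q : ℝ)⁻¹
      have huv : (q : ℝ)⁻¹ - ((q : ℝ) + d)⁻¹ = d * ((q : ℝ)⁻¹ * ((q : ℝ) + d)⁻¹) := by
        field_simp; ring
      have hdd : (d : ℝ) * (d : ℝ)⁻¹ = 1 := mul_inv_cancel₀ hd0.ne'
      have hsub : (d : ℝ)⁻¹ * ((q : ℝ)⁻¹ - ((q : ℝ) + d)⁻¹) = (q : ℝ)⁻¹ * ((q : ℝ) + d)⁻¹ := by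
        rw [huv]
        linear_combination (q : ℝ)⁻¹ * ((q : ℝ) + d)⁻¹ * hdd
      linear_combination ((q : ℝ) + d)⁻¹ * ((d : ℝ)⁻¹ * key
        - homSum n ((q : ℝ) + d)⁻¹ (q : ℝ)⁻¹ * hsub) - (q : ℝ)⁻¹ ^ (n + 1) * hsub
    rw [hterm]
    push_cast
    ring

lemma tailSum_nonneg (s N : ℕ) : 0 ≤ tailSum s N :=
  Finset.sum_nonneg fun _ _ => Finset.sum_nonneg fun _ _ => by positivity

lemma tailSum_le (s N : ℕ) (hs : 2 ≤ s) :
    tailSum s N ≤ ((∑ q ∈ Finset.Icc 1 N, (q : ℝ)⁻¹) +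
      (∑ q ∈ Finset.Icc 1 N, (q : ℝ)⁻¹) ^ 2) / N := by
  have hterm : ∀ q ∈ Finset.Icc 1 N, ∀ p ∈ Finset.Ioc (N - q) N,
      (p : ℝ)⁻¹ * (q : ℝ)⁻¹ ^ s ≤
        ((q : ℝ)⁻¹ ^ 2 + (q : ℝ)⁻¹ * (p : ℝ)⁻¹) / N := by
    intro q hq p hp
    simp only [Finset.mem_Icc, Finset.mem_Ioc] at hq hp
    have hq1 : (1 : ℝ) ≤ q := by exact_mod_cast hq.1
    have hp1 : (1 : ℝ) ≤ p := by exact_mod_cast (by omega : 1 ≤ p)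
    have hN : (1 : ℝ) ≤ N := by exact_mod_cast (by omega : 1 ≤ N)
    have hpq : (N : ℝ) ≤ p + q := by exact_mod_cast (by omega : N ≤ p + q)
    calc (p : ℝ)⁻¹ * (q : ℝ)⁻¹ ^ s ≤ (p : ℝ)⁻¹ * (q : ℝ)⁻¹ ^ 2 := by
          refine mul_le_mul_of_nonneg_left ?_ (by positivity)
          exact pow_le_pow_of_le_one (by positivity) (inv_le_one_of_one_le₀ hq1) hs
      _ = ((q : ℝ)⁻¹ ^ 2 + (q : ℝ)⁻¹ * (p : ℝ)⁻¹) / (p + q) := by field_simp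
      _ ≤ _ := by gcongr
  calc tailSum s N ≤ ∑ q ∈ Finset.Icc 1 N, ∑ p ∈ Finset.Ioc (N - q) N,
        ((q : ℝ)⁻¹ ^ 2 + (q : ℝ)⁻¹ * (p : ℝ)⁻¹) / N :=
        Finset.sum_le_sum fun q hq => Finset.sum_le_sum fun p hp => hterm q hq p hp
    _ ≤ ∑ q ∈ Finset.Icc 1 N,
        ((q : ℝ)⁻¹ + (q : ℝ)⁻¹ * ∑ p ∈ Finset.Icc 1 N, (p : ℝ)⁻¹) / N := by
        refine Finset.sum_le_sum fun q hq => ?_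
        have hq := Finset.mem_Icc.mp hq
        rw [← Finset.sum_div, Finset.sum_add_distrib, ← Finset.mul_sum]
        have hcard : ∑ p ∈ Finset.Ioc (N - q) N, (q : ℝ)⁻¹ ^ 2 = (q : ℝ)⁻¹ := by
          rw [Finset.sum_const, Nat.card_Ioc, Nat.sub_sub_self hq.2, nsmul_eq_mul, sq, ← mul_assoc,
            mul_inv_cancel₀ (by exact_mod_cast (by omega : q ≠ 0)), one_mul]
        rw [hcard]
        gcongr
        intro p hp
        simp only [Finset.mem_Icc, Finset.mem_Ioc] at *
        omega
    _ = _ := by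
        rw [← Finset.sum_div, Finset.sum_add_distrib, ← Finset.sum_mul, sq]

lemma tendsto_tailSum (s : ℕ) (hs : 2 ≤ s) : Tendsto (tailSum s) atTop (nhds 0) := by
  have hH : ∀ N : ℕ, ∑ q ∈ Finset.Icc 1 N, (q : ℝ)⁻¹ ≤ 1 + Real.log N := by
    intro N
    have := harmonic_le_one_add_log N
    rw [harmonic_eq_sum_Icc] at this
    push_cast at this
    exact this
  have hlim : Tendsto (fun N : ℕ => ((1 + Real.log N) + (1 + Real.log N) ^ 2) / (N : ℝ))
      atTop (nhds 0) := by
    have hlog (k : ℕ) : Tendsto (fun N : ℕ => Real.log N ^ k / (N : ℝ)) atTop (nhds 0) := by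
      simpa [Function.comp_def] using
        (Real.tendsto_pow_log_div_mul_add_atTop 1 0 k one_ne_zero).comp
          tendsto_natCast_atTop_atTop
    have := (((hlog 0).const_mul 2).add ((hlog 1).const_mul 3)).add (hlog 2)
    simp only [mul_zero, add_zero] at this
    refine this.congr fun N => ?_
    ring
  refine squeeze_zero (tailSum_nonneg s) (fun N => (tailSum_le s N hs).trans ?_) hlim
  have h0 : (0 : ℝ) ≤ ∑ q ∈ Finset.Icc 1 N, (q : ℝ)⁻¹ :=
    Finset.sum_nonneg fun _ _ => by positivity
  gcongr
  · exact hH N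
  · exact hH N

/-- The pairs `(p, q)` with `1 ≤ q < p ≤ N`. -/
def lowerPairs (N : ℕ) : Finset (ℕ × ℕ) :=
  (Finset.Icc 1 N ×ˢ Finset.Icc 1 N).filter fun x => x.2 < x.1

lemma mem_lowerPairs {N : ℕ} {x : ℕ × ℕ} :
    x ∈ lowerPairs N ↔ 1 ≤ x.2 ∧ x.2 < x.1 ∧ x.1 ≤ N := by
  simp only [lowerPairs, Finset.mem_filter, Finset.mem_product, Finset.mem_Icc]
  omega

lemma sum_lowerPairs (f : ℕ × ℕ → ℝ) (N : ℕ) :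
    ∑ x ∈ lowerPairs N, f x = ∑ p ∈ Finset.Icc 1 N, ∑ q ∈ Finset.Ico 1 p, f (p, q) := by
  refine Finset.sum_finset_product _ _ _ fun x => ?_
  simp only [mem_lowerPairs, Finset.mem_Icc, Finset.mem_Ico]
  omega

lemma lowerPairs_mono : Monotone lowerPairs := by
  intro M N h x
  simp only [mem_lowerPairs]
  omega

lemma sum_lowerPairs_sub (f : ℕ × ℕ → ℝ) (N : ℕ) :
    ∑ x ∈ lowerPairs N, f (x.1 - x.2, x.2) =
      ∑ x ∈ (Finset.Icc 1 N ×ˢ Finset.Icc 1 N).filter (fun x => x.1 + x.2 ≤ N), f x := by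
  refine Finset.sum_nbij' (fun x => (x.1 - x.2, x.2)) (fun x => (x.1 + x.2, x.2)) ?_ ?_ ?_ ?_ ?_ <;>
    rintro ⟨p, q⟩ h <;>
    simp only [mem_lowerPairs, Finset.mem_filter, Finset.mem_product, Finset.mem_Icc,
      Prod.mk.injEq, and_true] at * <;> omega

lemma sum_filter_add_le_of_symm (f : ℕ × ℕ → ℝ) (hf : ∀ p q, f (p, q) = f (q, p)) (N : ℕ) :
    ∑ x ∈ (Finset.Icc 1 N ×ˢ Finset.Icc 1 N).filter (fun x => x.1 + x.2 ≤ N), f x =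
      ∑ m ∈ Finset.Icc 1 (N / 2), f (m, m) +
        2 * ∑ x ∈ (lowerPairs N).filter (fun x => x.1 + x.2 ≤ N), f x := by
  set s := (Finset.Icc 1 N ×ˢ Finset.Icc 1 N).filter (fun x => x.1 + x.2 ≤ N) with hs
  have hmem : ∀ x : ℕ × ℕ, x ∈ s ↔ 1 ≤ x.1 ∧ 1 ≤ x.2 ∧ x.1 + x.2 ≤ N := fun x => by
    simp only [hs, Finset.mem_filter, Finset.mem_product, Finset.mem_Icc]
    omega
  have hlow : s.filter (fun x => x.2 < x.1) = (lowerPairs N).filter (fun x => x.1 + x.2 ≤ N) := by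
    ext x
    simp only [Finset.mem_filter, hmem, mem_lowerPairs]
    omega
  have hupp : ∑ x ∈ (s.filter (fun x => ¬ x.2 < x.1)).filter (fun x => x.1 < x.2), f x =
      ∑ x ∈ (lowerPairs N).filter (fun x => x.1 + x.2 ≤ N), f x := by
    refine Finset.sum_nbij' Prod.swap Prod.swap ?_ ?_ ?_ ?_ ?_
    · rintro ⟨p, q⟩ h
      simp only [Finset.mem_filter, hmem, mem_lowerPairs, Prod.swap_prod_mk] at *
      omega
    · rintro ⟨p, q⟩ h
      simp only [Finset.mem_filter, hmem, mem_lowerPairs, Prod.swap_prod_mk] at *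
      omega
    · exact fun _ _ => rfl
    · exact fun _ _ => rfl
    · exact fun x _ => hf x.1 x.2
  have hdiag : ∑ x ∈ (s.filter (fun x => ¬ x.2 < x.1)).filter (fun x => ¬ x.1 < x.2), f x =
      ∑ m ∈ Finset.Icc 1 (N / 2), f (m, m) := by
    refine Finset.sum_nbij' Prod.fst (fun m => (m, m)) ?_ ?_ ?_ ?_ ?_
    · rintro ⟨p, q⟩ h
      simp only [Finset.mem_filter, hmem, Finset.mem_Icc] at *
      omega
    · intro m h
      simp only [Finset.mem_filter, hmem, Finset.mem_Icc] at *
      omega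
    · rintro ⟨p, q⟩ h
      simp only [Finset.mem_filter, hmem, Prod.mk.injEq, true_and] at *
      omega
    · exact fun _ _ => rfl
    · rintro ⟨p, q⟩ h
      simp only [Finset.mem_filter, hmem] at h
      obtain rfl : p = q := by omega
      rfl
  rw [← Finset.sum_filter_add_sum_filter_not s (fun x => x.2 < x.1), hlow,
    ← Finset.sum_filter_add_sum_filter_not (s.filter fun x => ¬ x.2 < x.1) (fun x => x.1 < x.2),
    hupp, hdiag]
  ring

/-- The part of `∑_{a + b = n + 3} 1 / (p ^ a q ^ b)` with `a ≥ 2`, `b ≥ 1`. -/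
noncomputable def convergentTerm (n : ℕ) (x : ℕ × ℕ) : ℝ :=
  (x.1 : ℝ)⁻¹ ^ 2 * (x.2 : ℝ)⁻¹ * homSum n (x.1 : ℝ)⁻¹ (x.2 : ℝ)⁻¹

lemma convergentTerm_nonneg (n : ℕ) (x : ℕ × ℕ) : 0 ≤ convergentTerm n x := by
  have := homSum_nonneg n (inv_nonneg.mpr x.1.cast_nonneg : (0 : ℝ) ≤ _)
    (inv_nonneg.mpr x.2.cast_nonneg)
  unfold convergentTerm
  positivity

lemma convergentTerm_eq_sum (n : ℕ) (x : ℕ × ℕ) :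
    convergentTerm n x =
      ∑ k ∈ Finset.range (n + 1), (x.1 : ℝ)⁻¹ ^ (k + 2) * (x.2 : ℝ)⁻¹ ^ (n + 1 - k) := by
  unfold convergentTerm homSum
  rw [Finset.mul_sum]
  refine Finset.sum_congr rfl fun k hk => ?_
  rw [show n + 1 - k = (n - k) + 1 by have := Finset.mem_range.mp hk; omega]
  ring

lemma two_mul_sum_two_pow (n N : ℕ) :
    2 * ∑ x ∈ lowerPairs N, ∑ k ∈ Finset.range (n + 1),
        2 ^ (k + 1) * ((x.1 : ℝ)⁻¹ ^ (k + 2) * (x.2 : ℝ)⁻¹ ^ (n + 1 - k)) =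
      (n + 2) * ∑ m ∈ Finset.Icc 1 (N / 2), (m : ℝ)⁻¹ ^ (n + 3)
        + 2 * ∑ x ∈ (lowerPairs N).filter (fun x => x.1 + x.2 ≤ N), convergentTerm n x
        - 2 * ∑ x ∈ (lowerPairs N).filter (fun x => ¬ x.1 + x.2 ≤ N),
            (x.1 : ℝ)⁻¹ * (x.2 : ℝ)⁻¹ ^ (n + 2) := by
  set G : ℕ × ℕ → ℝ := fun x =>
    (x.1 : ℝ)⁻¹ * (x.2 : ℝ)⁻¹ * homSum (n + 1) (x.1 : ℝ)⁻¹ (x.2 : ℝ)⁻¹ with hG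
  have hsymm : ∀ p q, G (p, q) = G (q, p) := fun p q => by
    simp only [hG]
    rw [homSum_comm, mul_comm (p : ℝ)⁻¹]
  have hsplit : ∀ x, G x = (x.1 : ℝ)⁻¹ * (x.2 : ℝ)⁻¹ ^ (n + 2) + convergentTerm n x := fun x => by
    simp only [hG, convergentTerm, homSum_succ]
    ring
  have hdiag : ∀ m : ℕ, G (m, m) = (n + 2) * (m : ℝ)⁻¹ ^ (n + 3) := fun m => by
    simp only [hG, homSum_self]
    push_cast
    ring
  have hpf : ∑ x ∈ lowerPairs N, G (x.1 - x.2, x.2) =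
      2 * ∑ x ∈ lowerPairs N, ∑ k ∈ Finset.range (n + 2),
        2 ^ k * ((x.1 : ℝ)⁻¹ ^ (k + 1) * (x.2 : ℝ)⁻¹ ^ (n + 2 - k)) := by
    simp only [sum_lowerPairs]
    rw [Finset.mul_sum]
    refine Finset.sum_congr rfl fun p _ => ?_
    set g : ℕ → ℝ := fun q => ∑ k ∈ Finset.range (n + 2),
      2 ^ k * ((p : ℝ)⁻¹ ^ (k + 1) * (q : ℝ)⁻¹ ^ (n + 2 - k)) with hg
    have hterm : ∀ q ∈ Finset.Ico 1 p, G (p - q, q) = g (p - q) + g q := by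
      intro q hq
      have hq := Finset.mem_Ico.mp hq
      have hq0 : (0 : ℝ) < q := by exact_mod_cast hq.1
      have hd0 : (0 : ℝ) < ((p - q : ℕ) : ℝ) := by exact_mod_cast (by omega : 0 < p - q)
      have hp : (p : ℝ) = ((p - q : ℕ) : ℝ) + q := by exact_mod_cast (by omega : p = p - q + q)
      have hpf := mul_homSum_eq_sum (n + 1) (t := (p : ℝ)⁻¹) (u := ((p - q : ℕ) : ℝ)⁻¹)
        (v := (q : ℝ)⁻¹) (by rw [hp]; field_simp; ring)
      simp only [hG, hg, hpf, ← Finset.sum_add_distrib]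
      refine Finset.sum_congr rfl fun k _ => ?_
      ring
    rw [Finset.sum_congr rfl hterm, Finset.sum_add_distrib, sum_Ico_one_reflect, ← two_mul]
  have hfirst : ∑ x ∈ lowerPairs N, ∑ k ∈ Finset.range (n + 2),
        2 ^ k * ((x.1 : ℝ)⁻¹ ^ (k + 1) * (x.2 : ℝ)⁻¹ ^ (n + 2 - k)) =
      ∑ x ∈ lowerPairs N, ∑ k ∈ Finset.range (n + 1),
        2 ^ (k + 1) * ((x.1 : ℝ)⁻¹ ^ (k + 2) * (x.2 : ℝ)⁻¹ ^ (n + 1 - k)) +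
      ∑ x ∈ lowerPairs N, (x.1 : ℝ)⁻¹ * (x.2 : ℝ)⁻¹ ^ (n + 2) := by
    rw [← Finset.sum_add_distrib]
    refine Finset.sum_congr rfl fun x _ => ?_
    rw [Finset.sum_range_succ']
    congr 1
    · refine Finset.sum_congr rfl fun k _ => ?_
      rw [show n + 2 - (k + 1) = n + 1 - k by omega]
    · simp
  have hfin := sum_lowerPairs_sub G N
  rw [sum_filter_add_le_of_symm G hsymm, hpf, hfirst,
    Finset.sum_congr rfl fun m _ => hdiag m, Finset.sum_congr rfl fun x _ => hsplit x,
    Finset.sum_add_distrib, ← Finset.mul_sum,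
    ← Finset.sum_filter_add_sum_filter_not (lowerPairs N) (fun x => x.1 + x.2 ≤ N)
      (fun x => (x.1 : ℝ)⁻¹ * (x.2 : ℝ)⁻¹ ^ (n + 2))] at hfin
  linarith

lemma sum_lowerPairs_filter_not_le (s N : ℕ) :
    ∑ x ∈ (lowerPairs N).filter (fun x => ¬ x.1 + x.2 ≤ N), (x.1 : ℝ)⁻¹ * (x.2 : ℝ)⁻¹ ^ s ≤
      tailSum s N := by
  have htail : tailSum s N =
      ∑ x ∈ (Finset.Icc 1 N ×ˢ Finset.Icc 1 N).filter (fun x => ¬ x.1 + x.2 ≤ N),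
        (x.1 : ℝ)⁻¹ * (x.2 : ℝ)⁻¹ ^ s := by
    unfold tailSum
    symm
    refine Finset.sum_finset_product_right _ _ _ fun x => ?_
    simp only [Finset.mem_filter, Finset.mem_product, Finset.mem_Icc, Finset.mem_Ioc]
    omega
  rw [htail]
  refine Finset.sum_le_sum_of_subset_of_nonneg
    (Finset.filter_subset_filter _ (Finset.filter_subset _ _)) fun _ _ _ => by positivity

lemma tendsto_eulerSum1 (s : ℕ) (hs : 2 ≤ s) :
    Tendsto (fun N : ℕ => ∑ m ∈ Finset.Icc 1 N, (m : ℝ)⁻¹ ^ s) atTop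
      (nhds (eulerSum1 s 1)) := by
  have hsum : Summable fun m : ℕ => ((m : ℝ) ^ s)⁻¹ := Real.summable_nat_pow_inv.mpr (by omega)
  have hlim : Tendsto (fun N : ℕ => ∑ m ∈ Finset.Icc 1 N, (1 : ℝ) ^ m / (m : ℝ) ^ s) atTop
      (nhds (∑' m : ℕ, ((m : ℝ) ^ s)⁻¹)) := by
    refine (hsum.hasSum.tendsto_sum_nat.comp (tendsto_add_atTop_nat 1)).congr fun N => ?_
    rw [Function.comp_apply, Finset.sum_range_eq_add_Ico _ (by omega : 0 < N + 1),
      Finset.Ico_add_one_right_eq_Icc]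
    simp [show s ≠ 0 by omega]
  refine (tendsto_nhds_limUnder ⟨_, hlim⟩).congr fun N => ?_
  simp

lemma tendsto_sum_convergentTerm (n : ℕ) :
    Tendsto (fun N => ∑ x ∈ lowerPairs N, convergentTerm n x) atTop
      (nhds (eulerSum1 (n + 3) 1)) := by
  have := (tendsto_eulerSum1 (n + 3) (by omega)).sub (tendsto_tailSum (n + 2) (by omega))
  rw [sub_zero] at this
  refine this.congr fun N => ?_
  rw [← sum_homSum_add_tailSum, sum_lowerPairs]
  simp [convergentTerm]

lemma tendsto_sum_filter_convergentTerm (n : ℕ) :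
    Tendsto (fun N => ∑ x ∈ (lowerPairs N).filter (fun x => x.1 + x.2 ≤ N), convergentTerm n x)
      atTop (nhds (eulerSum1 (n + 3) 1)) := by
  have h := tendsto_sum_convergentTerm n
  refine tendsto_of_tendsto_of_tendsto_of_le_of_le
    (h.comp (Nat.tendsto_div_const_atTop (two_ne_zero))) h (fun N => ?_) fun N => ?_
  · refine Finset.sum_le_sum_of_subset_of_nonneg (fun x => ?_) fun x _ _ => convergentTerm_nonneg n x
    simp only [Finset.mem_filter, mem_lowerPairs]
    omega
  · exact Finset.sum_le_sum_of_subset_of_nonneg (Finset.filter_subset _ _)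
      fun x _ _ => convergentTerm_nonneg n x

lemma tendsto_eulerSum2 (n k : ℕ) (hk : k < n + 1) :
    Tendsto (fun N => ∑ x ∈ lowerPairs N, (x.1 : ℝ)⁻¹ ^ (k + 2) * (x.2 : ℝ)⁻¹ ^ (n + 1 - k)) atTop
      (nhds (eulerSum2 (k + 2) (n + 1 - k) 1 1)) := by
  set S : ℕ → ℝ :=
    fun N => ∑ x ∈ lowerPairs N, (x.1 : ℝ)⁻¹ ^ (k + 2) * (x.2 : ℝ)⁻¹ ^ (n + 1 - k) with hS
  have hmono : Monotone S := fun M N h =>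
    Finset.sum_le_sum_of_subset_of_nonneg (lowerPairs_mono h) fun _ _ _ => by positivity
  obtain ⟨C, hC⟩ := (tendsto_sum_convergentTerm n).bddAbove_range
  have hbdd : BddAbove (Set.range S) := by
    refine ⟨C, ?_⟩
    rintro _ ⟨N, rfl⟩
    refine le_trans (Finset.sum_le_sum fun x _ => ?_) (hC ⟨N, rfl⟩)
    rw [convergentTerm_eq_sum]
    exact Finset.single_le_sum
      (f := fun k => (x.1 : ℝ)⁻¹ ^ (k + 2) * (x.2 : ℝ)⁻¹ ^ (n + 1 - k))
      (fun _ _ => by positivity) (Finset.mem_range.mpr hk)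
  have hEq : S = fun N : ℕ => ∑ n₁ ∈ Finset.Icc 1 N, ∑ n₂ ∈ Finset.Ico 1 n₁,
      (1 : ℝ) ^ n₁ * 1 ^ n₂ / ((n₁ : ℝ) ^ (k + 2) * (n₂ : ℝ) ^ (n + 1 - k)) := by
    funext N
    simp only [hS, sum_lowerPairs, one_pow, mul_one, one_div, mul_inv, inv_pow]
  rw [eulerSum2, ← hEq]
  exact tendsto_nhds_limUnder ⟨_, tendsto_atTop_ciSup hmono hbdd⟩

/-- For `w ≥ 3`: `∑_{a+b=w, a≥2} 2^{a−1} ζ(a,b) = ((w+1)/2) ζ(w)`. -/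
theorem weighted_sum_double_zeta (w : ℕ) (hw : 3 ≤ w) :
    ∑ a ∈ Finset.Icc 2 (w - 1), (2 : ℝ) ^ (a - 1) * eulerSum2 a (w - a) 1 1
      = ((w : ℝ) + 1) / 2 * eulerSum1 w 1 := by
  obtain ⟨n, rfl⟩ : ∃ n, w = n + 3 := ⟨w - 3, by omega⟩
  have hreindex : ∑ a ∈ Finset.Icc 2 (n + 3 - 1),
        (2 : ℝ) ^ (a - 1) * eulerSum2 a (n + 3 - a) 1 1 =
      ∑ k ∈ Finset.range (n + 1), (2 : ℝ) ^ (k + 1) * eulerSum2 (k + 2) (n + 1 - k) 1 1 := by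
    rw [← Finset.Ico_add_one_right_eq_Icc, Finset.sum_Ico_eq_sum_range]
    refine Finset.sum_congr (by congr 1) fun k _ => ?_
    rw [show 2 + k - 1 = k + 1 by omega, show n + 3 - (2 + k) = n + 1 - k by omega, add_comm 2 k]
  have hleft : Tendsto (fun N => 2 * ∑ x ∈ lowerPairs N, ∑ k ∈ Finset.range (n + 1),
        2 ^ (k + 1) * ((x.1 : ℝ)⁻¹ ^ (k + 2) * (x.2 : ℝ)⁻¹ ^ (n + 1 - k))) atTop
      (nhds (2 * ∑ k ∈ Finset.range (n + 1),
        (2 : ℝ) ^ (k + 1) * eulerSum2 (k + 2) (n + 1 - k) 1 1)) := by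
    refine Tendsto.const_mul 2 ?_
    have := tendsto_finsetSum (Finset.range (n + 1)) fun k hk =>
      (tendsto_eulerSum2 n k (Finset.mem_range.mp hk)).const_mul ((2 : ℝ) ^ (k + 1))
    refine this.congr fun N => ?_
    simp only [Finset.mul_sum]
    exact Finset.sum_comm
  have herr : Tendsto (fun N => ∑ x ∈ (lowerPairs N).filter (fun x => ¬ x.1 + x.2 ≤ N),
      (x.1 : ℝ)⁻¹ * (x.2 : ℝ)⁻¹ ^ (n + 2)) atTop (nhds 0) :=
    squeeze_zero (fun N => Finset.sum_nonneg fun _ _ => by positivity)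
      (sum_lowerPairs_filter_not_le (n + 2)) (tendsto_tailSum (n + 2) (by omega))
  have hright := ((((tendsto_eulerSum1 (n + 3) (by omega)).comp
    (Nat.tendsto_div_const_atTop two_ne_zero)).const_mul ((n : ℝ) + 2)).add
      ((tendsto_sum_filter_convergentTerm n).const_mul 2)).sub (herr.const_mul 2)
  have heq := tendsto_nhds_unique (hleft.congr (two_mul_sum_two_pow n)) hright
  rw [hreindex]
  push_cast
  linarith
end

section
/- For every integer w ≥ 3, ∑_{a+b=w, a≥2, b≥1} 2^{a−1} ζ(ā,b) = ζ(w̄) + ((w−1)/2)·ζ(w). -/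
open Filter

open Topology

namespace WeightedEulerSum

/-- Partial sums of the alternating harmonic series `∑_{j ≥ 1} (-1)^j / j`. -/
noncomputable def altHarmonic (k : ℕ) : ℝ :=
  ∑ i ∈ Finset.range k, (-1 : ℝ) ^ (i + 1) / ((i : ℝ) + 1)

lemma altHarmonic_succ (k : ℕ) :
    altHarmonic (k + 1) = altHarmonic k + (-1 : ℝ) ^ (k + 1) / ((k : ℝ) + 1) := by
  simp [altHarmonic, Finset.sum_range_succ]

lemma exists_tendsto_altHarmonic : ∃ l, Tendsto altHarmonic atTop (𝓝 l) := by
  have hanti : Antitone (fun i : ℕ => 1 / ((i : ℝ) + 1)) := fun a b h =>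
    Nat.one_div_le_one_div h
  obtain ⟨l, hl⟩ := hanti.tendsto_alternating_series_of_tendsto_zero
    tendsto_one_div_add_atTop_nhds_zero_nat
  refine ⟨-l, hl.neg.congr fun n => ?_⟩
  rw [altHarmonic, ← Finset.sum_neg_distrib]
  exact Finset.sum_congr rfl fun i _ => by ring

lemma exists_abs_altHarmonic_le : ∃ C, ∀ k, |altHarmonic k| ≤ C := by
  obtain ⟨l, hl⟩ := exists_tendsto_altHarmonic
  obtain ⟨C, hC⟩ := (Metric.isBounded_range_of_tendsto _ hl).exists_norm_le
  exact ⟨C, fun k => hC _ ⟨k, rfl⟩⟩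

lemma sum_neg_one_pow_div (m N : ℕ) (h : m ≤ N) :
    ∑ n ∈ Finset.Ico (m + 1) (N + 1), (-1 : ℝ) ^ n / (n : ℝ)
      = altHarmonic N - altHarmonic m := by
  induction N, h using Nat.le_induction with
  | base => simp
  | succ N hN ih =>
    rw [Finset.sum_Ico_succ_top (by omega), ih, altHarmonic_succ]
    push_cast
    ring

/-- The number of terms left after cancelling the terms `j` and `-j` in the sum over
`-m < j ≤ N - 2m`. -/
def cutoff (m N : ℕ) : ℕ := if 2 * m ≤ N then N - 2 * m else 2 * m - N - 1

lemma sum_neg_one_pow_div_sub (m N : ℕ) (hm : 1 ≤ m) (h : m ≤ N) :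
    ∑ n ∈ Finset.Ico (m + 1) (N + 1), (-1 : ℝ) ^ n / ((n : ℝ) - 2 * m)
      = altHarmonic (cutoff m N) - altHarmonic (m - 1) := by
  induction N, h using Nat.le_induction with
  | base =>
    have : cutoff m m = m - 1 := by unfold cutoff; split_ifs <;> omega
    simp [this]
  | succ N hN ih =>
    rw [Finset.sum_Ico_succ_top (by omega), ih]
    rcases lt_trichotomy (N + 1) (2 * m) with hlt | heq | hgt
    · obtain ⟨d, hd⟩ : ∃ d, 2 * m = N + 1 + d + 1 := ⟨2 * m - N - 2, by omega⟩
      have h₁ : cutoff m N = d + 1 := by unfold cutoff; split_ifs <;> omega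
      have h₂ : cutoff m (N + 1) = d := by unfold cutoff; split_ifs <;> omega
      have hpar : (-1 : ℝ) ^ (N + 1) = (-1) ^ (d + 1) := by
        rw [neg_one_pow_eq_pow_mod_two, neg_one_pow_eq_pow_mod_two (n := d + 1)]
        congr 1
        omega
      have hd' : (2 : ℝ) * m = N + 1 + d + 1 := by exact_mod_cast hd
      have hden : (((N + 1 : ℕ) : ℝ) - 2 * m) = -((d : ℝ) + 1) := by
        rw [hd']; push_cast; ring
      rw [h₁, h₂, altHarmonic_succ, hpar, hden, div_neg]
      ring
    · have h₁ : cutoff m N = 0 := by unfold cutoff; split_ifs <;> omega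
      have h₂ : cutoff m (N + 1) = 0 := by unfold cutoff; split_ifs <;> omega
      have hden : (((N + 1 : ℕ) : ℝ) - 2 * m) = 0 := by
        rw [heq]; push_cast; ring
      rw [h₁, h₂, hden]
      simp
    · obtain ⟨d, hd⟩ : ∃ d, N = 2 * m + d := ⟨N - 2 * m, by omega⟩
      have h₁ : cutoff m N = d := by unfold cutoff; split_ifs <;> omega
      have h₂ : cutoff m (N + 1) = d + 1 := by unfold cutoff; split_ifs <;> omega
      have hpar : (-1 : ℝ) ^ (N + 1) = (-1) ^ (d + 1) := by
        rw [neg_one_pow_eq_pow_mod_two, neg_one_pow_eq_pow_mod_two (n := d + 1)]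
        congr 1
        omega
      have hden : (((N + 1 : ℕ) : ℝ) - 2 * m) = (d : ℝ) + 1 := by
        rw [hd]; push_cast; ring
      rw [h₁, h₂, altHarmonic_succ, hpar, hden]
      ring

lemma sum_one_div_two_mul_sub (n : ℕ) :
    ∑ m ∈ Finset.Ico 1 n, 1 / (2 * (m : ℝ) - n) = 0 := by
  have h : ∑ m ∈ Finset.Ico 1 n, 1 / (2 * (m : ℝ) - n)
      = ∑ m ∈ Finset.Ico 1 n, -(1 / (2 * (m : ℝ) - n)) := by
    refine Finset.sum_nbij' (fun m => n - m) (fun m => n - m) ?_ ?_ ?_ ?_ ?_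
    all_goals intro m hm; rw [Finset.mem_Ico] at hm
    · rw [Finset.mem_Ico]; omega
    · rw [Finset.mem_Ico]; omega
    · omega
    · omega
    · rw [Nat.cast_sub hm.2.le, ← div_neg]
      congr 1
      ring
  rw [Finset.sum_neg_distrib] at h
  linarith

/-- The weighted geometric sum of the summands of `ζ(ā, b)`, evaluated in closed form; division
by zero makes the first two terms vanish on the diagonal `n = 2m`. -/
lemma sum_weighted_summand (k m n : ℕ) (hm : 1 ≤ m) (hn : 1 ≤ n) :
    ∑ a ∈ Finset.Icc 2 (k + 2), (2 : ℝ) ^ (a - 1) *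
        ((-1) ^ n * 1 ^ m / ((n : ℝ) ^ a * (m : ℝ) ^ (k + 3 - a)))
      = (-1) ^ n * (2 / (n : ℝ)) ^ (k + 2) * (1 / (2 * (m : ℝ) - n))
        + (1 / (m : ℝ) ^ (k + 2) * ((-1) ^ n / ((n : ℝ) - 2 * m) - (-1) ^ n / (n : ℝ))
          + if n = 2 * m then ((k : ℝ) + 2) / 2 * (1 / (m : ℝ) ^ (k + 3)) else 0) := by
  have hm0 : (m : ℝ) ≠ 0 := by positivity
  have hn0 : (n : ℝ) ≠ 0 := by positivity
  set G := ∑ i ∈ Finset.range (k + 2), (2 / (n : ℝ)) ^ i * (1 / (m : ℝ)) ^ (k + 2 - 1 - i) with hG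
  have hlhs : ∑ a ∈ Finset.Icc 2 (k + 2), (2 : ℝ) ^ (a - 1) *
        ((-1) ^ n * 1 ^ m / ((n : ℝ) ^ a * (m : ℝ) ^ (k + 3 - a)))
      = (-1) ^ n / ((n : ℝ) * m) * (G - (1 / (m : ℝ)) ^ (k + 1)) := by
    rw [hG, Finset.sum_range_succ']
    have hI : Finset.Icc 2 (k + 2) = Finset.Ico 2 (k + 3) := by ext; simp; omega
    rw [hI, Finset.sum_Ico_eq_sum_range]
    simp only [pow_zero, one_mul, Nat.sub_zero,
      show k + 2 - 1 = k + 1 from rfl, add_sub_cancel_right, Finset.mul_sum]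
    refine Finset.sum_congr (by congr 1) fun i hi => ?_
    rw [Finset.mem_range] at hi
    obtain ⟨j, rfl⟩ : ∃ j, k = i + j := ⟨k - i, by omega⟩
    rw [show 2 + i - 1 = i + 1 by omega, show i + j + 3 - (2 + i) = j + 1 by omega,
      show i + j + 1 - (i + 1) = j by omega, div_pow, one_div_pow]
    field_simp
    ring
  rw [hlhs]
  have hgeom := (Commute.all (2 / (n : ℝ)) (1 / (m : ℝ))).geom_sum₂_mul (k + 2)
  rw [← hG] at hgeom
  split_ifs with hnm
  · subst hnm
    have hx : 2 / ((2 * m : ℕ) : ℝ) = 1 / (m : ℝ) := by push_cast; field_simp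
    have hGv : G = (k + 2) * (1 / (m : ℝ)) ^ (k + 1) := by
      rw [hG, hx]
      rw [Finset.sum_congr rfl (g := fun _ => (1 / (m : ℝ)) ^ (k + 1))]
      · simp
      · intro i hi
        rw [Finset.mem_range] at hi
        rw [← pow_add]
        congr 1
        omega
    rw [hGv, one_div_pow]
    have hpar : (-1 : ℝ) ^ (2 * m) = 1 := by simp
    rw [hpar]
    push_cast
    simp only [sub_self, div_zero, mul_zero, zero_add]
    field_simp
    ring
  · have hne : 2 * (m : ℝ) - n ≠ 0 := by
      rw [sub_ne_zero]
      exact_mod_cast Ne.symm hnm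
    have hne' : (n : ℝ) - 2 * m ≠ 0 := by
      rw [← neg_sub]; exact neg_ne_zero.mpr hne
    have hGv : G = ((2 / (n : ℝ)) ^ (k + 2) - (1 / (m : ℝ)) ^ (k + 2))
        * (n * m) * (1 / (2 * (m : ℝ) - n)) := by
      rw [← hgeom]
      field_simp
    have hinv : (-1 : ℝ) ^ n / ((n : ℝ) - 2 * m) = -((-1) ^ n * (1 / (2 * (m : ℝ) - n))) := by
      rw [← neg_sub, div_neg]; ring
    rw [hGv, hinv, one_div_pow, one_div_pow]
    generalize (2 / (n : ℝ)) ^ (k + 2) = X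
    generalize 1 / (2 * (m : ℝ) - n) = Y
    generalize (-1 : ℝ) ^ n = s
    field_simp
    ring

/-- The contribution of the inner index `m` to the weighted partial sum truncated at `N`. -/
noncomputable def column (k N m : ℕ) : ℝ :=
  if m ∈ Finset.Icc 1 N then
    1 / (m : ℝ) ^ (k + 2) * (altHarmonic (cutoff m N) - altHarmonic N + (-1) ^ m / (m : ℝ))
      + if 2 * m ≤ N then ((k : ℝ) + 2) / 2 * (1 / (m : ℝ) ^ (k + 3)) else 0
  else 0

lemma sum_partial_sums_eq (k N : ℕ) :
    ∑ a ∈ Finset.Icc 2 (k + 2), (2 : ℝ) ^ (a - 1) *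
        ∑ n ∈ Finset.Icc 1 N, ∑ m ∈ Finset.Ico 1 n,
          (-1 : ℝ) ^ n * 1 ^ m / ((n : ℝ) ^ a * (m : ℝ) ^ (k + 3 - a))
      = ∑' m, column k N m := by
  rw [tsum_eq_sum (s := Finset.Icc 1 N) (fun m hm => by rw [column, if_neg hm])]
  simp only [Finset.mul_sum]
  rw [Finset.sum_comm]
  have h₁ : ∀ n ∈ Finset.Icc 1 N, ∑ a ∈ Finset.Icc 2 (k + 2), ∑ m ∈ Finset.Ico 1 n,
      (2 : ℝ) ^ (a - 1) * ((-1 : ℝ) ^ n * 1 ^ m / ((n : ℝ) ^ a * (m : ℝ) ^ (k + 3 - a)))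
      = ∑ m ∈ Finset.Ico 1 n,
        (1 / (m : ℝ) ^ (k + 2) * ((-1) ^ n / ((n : ℝ) - 2 * m) - (-1) ^ n / (n : ℝ))
          + if n = 2 * m then ((k : ℝ) + 2) / 2 * (1 / (m : ℝ) ^ (k + 3)) else 0) := by
    intro n hn
    rw [Finset.sum_comm, Finset.sum_congr rfl fun m hm => sum_weighted_summand k m n
      (Finset.mem_Ico.mp hm).1 (Finset.mem_Icc.mp hn).1, Finset.sum_add_distrib,
      ← Finset.mul_sum, sum_one_div_two_mul_sub, mul_zero, zero_add]
  rw [Finset.sum_congr rfl h₁]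
  rw [Finset.sum_comm' (t' := Finset.Icc 1 N) (s' := fun m => Finset.Ico (m + 1) (N + 1))
    (by intro n m; simp only [Finset.mem_Icc, Finset.mem_Ico]; omega)]
  refine Finset.sum_congr rfl fun m hm => ?_
  rw [column, if_pos hm]
  rw [Finset.mem_Icc] at hm
  rw [Finset.sum_add_distrib, ← Finset.mul_sum, Finset.sum_sub_distrib,
    sum_neg_one_pow_div_sub m N hm.1 hm.2, sum_neg_one_pow_div m N hm.2, Finset.sum_ite_eq']
  congr 1
  · congr 1
    obtain ⟨j, rfl⟩ : ∃ j, m = j + 1 := ⟨m - 1, by omega⟩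
    rw [altHarmonic_succ, Nat.add_sub_cancel]
    push_cast
    ring
  · refine if_congr ?_ rfl rfl
    rw [Finset.mem_Ico]
    omega

lemma summable_one_div_pow (s : ℕ) (hs : 2 ≤ s) : Summable fun n : ℕ => 1 / (n : ℝ) ^ s :=
  Real.summable_one_div_nat_pow.mpr hs

lemma summable_neg_one_pow_div (s : ℕ) (hs : 2 ≤ s) :
    Summable fun n : ℕ => (-1 : ℝ) ^ n / (n : ℝ) ^ s :=
  .of_norm_bounded (summable_one_div_pow s hs) fun n => by simp

lemma tendsto_column (k m : ℕ) :
    Tendsto (fun N => column k N m) atTop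
      (𝓝 ((-1) ^ m / (m : ℝ) ^ (k + 3) + ((k : ℝ) + 2) / 2 * (1 / (m : ℝ) ^ (k + 3)))) := by
  rcases Nat.eq_zero_or_pos m with rfl | hm
  · simp [column]
  obtain ⟨l, hl⟩ := exists_tendsto_altHarmonic
  have hshift : Tendsto (fun N => altHarmonic (N - 2 * m)) atTop (𝓝 l) :=
    hl.comp (tendsto_sub_atTop_nat _)
  have hlim := (((hshift.sub hl).add_const ((-1 : ℝ) ^ m / (m : ℝ))).const_mul
    (1 / (m : ℝ) ^ (k + 2))).add_const (((k : ℝ) + 2) / 2 * (1 / (m : ℝ) ^ (k + 3)))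
  have hval : 1 / (m : ℝ) ^ (k + 2) * (l - l + (-1) ^ m / (m : ℝ))
      = (-1) ^ m / (m : ℝ) ^ (k + 3) := by
    rw [sub_self, zero_add, div_mul_div_comm, one_mul, ← pow_succ]
  rw [hval] at hlim
  refine hlim.congr' ?_
  filter_upwards [eventually_ge_atTop (2 * m)] with N hN
  rw [column, if_pos (Finset.mem_Icc.mpr ⟨hm, by omega⟩), if_pos hN, cutoff, if_pos hN]

lemma tendsto_tsum_column (k : ℕ) :
    Tendsto (fun N => ∑' m, column k N m) atTop
      (𝓝 (∑' m : ℕ, ((-1) ^ m / (m : ℝ) ^ (k + 3)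
        + ((k : ℝ) + 2) / 2 * (1 / (m : ℝ) ^ (k + 3))))) := by
  obtain ⟨C, hC⟩ := exists_abs_altHarmonic_le
  have hC0 : 0 ≤ C := (abs_nonneg _).trans (hC 0)
  refine tendsto_tsum_of_dominated_convergence
    (bound := fun m : ℕ => (C + C + 1 + ((k : ℝ) + 2) / 2) * (1 / (m : ℝ) ^ (k + 2)))
    ((summable_one_div_pow _ (by omega)).mul_left _) (fun m => tendsto_column k m)
    (.of_forall fun N m => ?_)
  rw [column]
  split_ifs with hm
  all_goals try (simp only [norm_zero]; positivity)
  all_goals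
    have hm1 : (1 : ℝ) ≤ m := by exact_mod_cast (Finset.mem_Icc.mp hm).1
    have hpos : 0 < 1 / (m : ℝ) ^ (k + 2) := by positivity
    have hsign : |(-1 : ℝ) ^ m / (m : ℝ)| ≤ 1 := by
      rw [abs_div, abs_neg_one_pow, Nat.abs_cast]
      exact (div_le_one (by linarith)).mpr hm1
    have hR : |altHarmonic (cutoff m N) - altHarmonic N + (-1) ^ m / (m : ℝ)| ≤ C + C + 1 :=
      (abs_add_le _ _).trans
        (add_le_add ((abs_sub _ _).trans (add_le_add (hC _) (hC _))) hsign)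
    have hR' : |1 / (m : ℝ) ^ (k + 2) *
        (altHarmonic (cutoff m N) - altHarmonic N + (-1) ^ m / (m : ℝ))|
        ≤ (C + C + 1) * (1 / (m : ℝ) ^ (k + 2)) := by
      rw [abs_mul, abs_of_pos hpos, mul_comm]
      exact mul_le_mul_of_nonneg_right hR hpos.le
    have hk : (0 : ℝ) ≤ ((k : ℝ) + 2) / 2 := by positivity
    rw [Real.norm_eq_abs, add_mul]
  · refine (abs_add_le _ _).trans (add_le_add hR' ?_)
    rw [abs_of_nonneg (by positivity)]
    gcongr
    norm_num
  · rw [add_zero]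
    exact hR'.trans (le_add_of_nonneg_right (by positivity))

lemma tendsto_sum_Icc_one {f : ℕ → ℝ} (hf : Summable f) (h0 : f 0 = 0) :
    Tendsto (fun N : ℕ => ∑ n ∈ Finset.Icc 1 N, f n) atTop (𝓝 (∑' n, f n)) := by
  refine ((tendsto_add_atTop_iff_nat 1).mpr hf.hasSum.tendsto_sum_nat).congr fun N => ?_
  rw [Finset.sum_range_succ', h0, add_zero, Finset.range_eq_Ico, Finset.sum_Ico_add' f 0 N 1]
  rfl

lemma eulerSum1_eq_tsum (s : ℕ) (hs : s ≠ 0) (e : ℝ)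
    (h : Summable fun n : ℕ => e ^ n / (n : ℝ) ^ s) :
    eulerSum1 s e = ∑' n : ℕ, e ^ n / (n : ℝ) ^ s :=
  (tendsto_sum_Icc_one h (by simp [hs])).limUnder_eq

lemma one_div_pow_mul_pow_le {a b m n : ℕ} (ha : 2 ≤ a) (hb : 1 ≤ b) (hm : 1 ≤ m) (hmn : m ≤ n) :
    1 / ((n : ℝ) ^ a * (m : ℝ) ^ b)
      ≤ 1 / (n : ℝ) ^ (3 / 2 : ℝ) * (1 / (m : ℝ) ^ (3 / 2 : ℝ)) := by
  have hm1 : (1 : ℝ) ≤ m := by exact_mod_cast hm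
  have hmn' : (m : ℝ) ≤ n := by exact_mod_cast hmn
  have hm0 : (0 : ℝ) < m := by linarith
  have hn0 : (0 : ℝ) < n := by linarith
  rw [div_mul_div_comm, one_mul]
  refine one_div_le_one_div_of_le (by positivity) ?_
  calc (n : ℝ) ^ (3 / 2 : ℝ) * (m : ℝ) ^ (3 / 2 : ℝ)
      = (n : ℝ) ^ (3 / 2 : ℝ) * ((m : ℝ) ^ (1 / 2 : ℝ) * m) := by
        rw [← Real.rpow_add_one hm0.ne']; norm_num
    _ ≤ (n : ℝ) ^ (3 / 2 : ℝ) * ((n : ℝ) ^ (1 / 2 : ℝ) * m) := by gcongr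
    _ = (n : ℝ) ^ 2 * (m : ℝ) ^ 1 := by
        rw [← mul_assoc, ← Real.rpow_add hn0, pow_one, ← Real.rpow_natCast]; norm_num
    _ ≤ (n : ℝ) ^ a * (m : ℝ) ^ b := by
        gcongr
        linarith

lemma tendsto_eulerSum2_bar (a b : ℕ) (ha : 2 ≤ a) (hb : 1 ≤ b) :
    Tendsto (fun N : ℕ => ∑ n ∈ Finset.Icc 1 N, ∑ m ∈ Finset.Ico 1 n,
      (-1 : ℝ) ^ n * 1 ^ m / ((n : ℝ) ^ a * (m : ℝ) ^ b)) atTop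
      (𝓝 (eulerSum2 a b (-1) 1)) := by
  have hs : Summable fun n : ℕ => 1 / (n : ℝ) ^ (3 / 2 : ℝ) :=
    Real.summable_one_div_nat_rpow.mpr (by norm_num)
  have hsum : Summable fun n : ℕ => ∑ m ∈ Finset.Ico 1 n,
      (-1 : ℝ) ^ n * 1 ^ m / ((n : ℝ) ^ a * (m : ℝ) ^ b) := by
    refine .of_norm_bounded (hs.mul_right (∑' m : ℕ, 1 / (m : ℝ) ^ (3 / 2 : ℝ))) fun n => ?_
    calc ‖∑ m ∈ Finset.Ico 1 n, (-1 : ℝ) ^ n * 1 ^ m / ((n : ℝ) ^ a * (m : ℝ) ^ b)‖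
        ≤ ∑ m ∈ Finset.Ico 1 n, 1 / (n : ℝ) ^ (3 / 2 : ℝ) * (1 / (m : ℝ) ^ (3 / 2 : ℝ)) := by
          refine norm_sum_le_of_le _ fun m hm => ?_
          rw [Finset.mem_Ico] at hm
          refine le_trans (le_of_eq ?_) (one_div_pow_mul_pow_le ha hb hm.1 hm.2.le)
          simp
      _ ≤ _ := by
          rw [← Finset.mul_sum]
          gcongr
          exact hs.sum_le_tsum _ fun m _ => by positivity
  have h := tendsto_sum_Icc_one hsum (by simp)
  rw [eulerSum2, h.limUnder_eq]
  exact h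

end WeightedEulerSum

open WeightedEulerSum in
/-- For `w ≥ 3`: `∑_{a+b=w, a≥2} 2^{a−1} ζ(ā,b) = ζ(w̄) + ((w−1)/2) ζ(w)`. -/
theorem weighted_sum_bar_unbar (w : ℕ) (hw : 3 ≤ w) :
    ∑ a ∈ Finset.Icc 2 (w - 1), (2 : ℝ) ^ (a - 1) * eulerSum2 a (w - a) (-1) 1
      = eulerSum1 w (-1) + ((w : ℝ) - 1) / 2 * eulerSum1 w 1 := by
  obtain ⟨k, rfl⟩ : ∃ k, w = k + 3 := ⟨w - 3, by omega⟩
  have hlim : Tendsto (fun N : ℕ => ∑ a ∈ Finset.Icc 2 (k + 2), (2 : ℝ) ^ (a - 1) *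
        ∑ n ∈ Finset.Icc 1 N, ∑ m ∈ Finset.Ico 1 n,
          (-1 : ℝ) ^ n * 1 ^ m / ((n : ℝ) ^ a * (m : ℝ) ^ (k + 3 - a))) atTop
      (𝓝 (∑ a ∈ Finset.Icc 2 (k + 2), (2 : ℝ) ^ (a - 1) * eulerSum2 a (k + 3 - a) (-1) 1)) := by
    refine tendsto_finsetSum _ fun a ha => ?_
    rw [Finset.mem_Icc] at ha
    exact (tendsto_eulerSum2_bar a (k + 3 - a) ha.1 (by omega)).const_mul _
  simp only [sum_partial_sums_eq] at hlim
  have halt := summable_neg_one_pow_div (k + 3) (by omega)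
  have hone := summable_one_div_pow (k + 3) (by omega)
  rw [show k + 3 - 1 = k + 2 from rfl, tendsto_nhds_unique hlim (tendsto_tsum_column k),
    halt.tsum_add (hone.mul_left _), tsum_mul_left,
    eulerSum1_eq_tsum _ (by omega) _ halt, eulerSum1_eq_tsum _ (by omega) _ (by simp)]
  simp only [one_pow]
  push_cast
  ring
end

section
/- For every integer w ≥ 4, with u = w−2 and v = w−1, ∑_{a+b=w−1, a≥2, b≥1} ζ(a,b,1) = ζ(v,1) + ζ(u,2). -/
open Filter

/-- The harmonic number `∑_{1 ≤ i < n} 1 / i`. -/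
noncomputable def harmonicBelow (n : ℕ) : ℝ :=
  ∑ i ∈ Finset.Ico 1 n, 1 / (i : ℝ)

lemma harmonicBelow_one : harmonicBelow 1 = 0 := by
  simp [harmonicBelow]

lemma harmonicBelow_succ {n : ℕ} (hn : 1 ≤ n) :
    harmonicBelow (n + 1) = harmonicBelow n + 1 / (n : ℝ) :=
  Finset.sum_Ico_succ_top hn _

lemma harmonicBelow_nonneg (n : ℕ) : 0 ≤ harmonicBelow n :=
  Finset.sum_nonneg fun _ _ => by positivity

lemma harmonicBelow_mono : Monotone harmonicBelow := fun _ _ h =>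
  Finset.sum_le_sum_of_subset_of_nonneg (Finset.Ico_subset_Ico_right h)
    fun _ _ _ => by positivity

lemma one_le_harmonicBelow_succ {n : ℕ} (hn : 1 ≤ n) : 1 ≤ harmonicBelow (n + 1) := by
  have h := harmonicBelow_mono (show 1 + 1 ≤ n + 1 by omega)
  rw [harmonicBelow_succ le_rfl, harmonicBelow_one] at h
  simpa using h

lemma harmonicBelow_add_le (a b : ℕ) :
    harmonicBelow (a + b + 1) ≤ harmonicBelow (a + 1) + harmonicBelow (b + 1) := by
  induction b with
  | zero => simp [harmonicBelow_one]
  | succ b ih =>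
    rw [← add_assoc, harmonicBelow_succ (by omega : 1 ≤ a + b + 1),
      harmonicBelow_succ (by omega : 1 ≤ b + 1)]
    have h : 1 / ((a + b + 1 : ℕ) : ℝ) ≤ 1 / ((b + 1 : ℕ) : ℝ) :=
      one_div_le_one_div_of_le (by positivity) (by exact_mod_cast (by omega))
    linarith

lemma harmonicBelow_succ_le_rpow {n : ℕ} (hn : 1 ≤ n) :
    harmonicBelow (n + 1) ≤ 5 * (n : ℝ) ^ (1 / 4 : ℝ) := by
  have h₁ : harmonicBelow (n + 1) = (harmonic n : ℝ) := by
    rw [harmonic_eq_sum_Icc, harmonicBelow]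
    push_cast
    exact Finset.sum_congr (by ext; simp) fun _ _ => one_div _
  have h₂ := harmonic_le_one_add_log n
  have h₃ := Real.log_le_rpow_div (Nat.cast_nonneg (α := ℝ) n) (by norm_num : (0 : ℝ) < 1 / 4)
  have h₄ : 1 ≤ (n : ℝ) ^ (1 / 4 : ℝ) :=
    Real.one_le_rpow (by exact_mod_cast hn) (by norm_num)
  rw [h₁]
  linarith

lemma summable_harmonicBelow_sq_div_sq :
    Summable fun n : ℕ => harmonicBelow (n + 1) ^ 2 / (n : ℝ) ^ 2 := by
  have hs : Summable fun n : ℕ => 25 * (n : ℝ) ^ (-(3 / 2) : ℝ) :=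
    (Real.summable_nat_rpow.2 (by norm_num)).mul_left _
  refine Summable.of_nonneg_of_le (fun n => by positivity) (fun n => ?_) hs
  rcases Nat.eq_zero_or_pos n with rfl | hn
  · simp [harmonicBelow_one]
  have hn' : (0 : ℝ) < n := by exact_mod_cast hn
  have h := pow_le_pow_left₀ (harmonicBelow_nonneg _) (harmonicBelow_succ_le_rpow hn) 2
  rw [div_le_iff₀ (by positivity)]
  refine h.trans_eq ?_
  rw [mul_pow, mul_assoc, ← Real.rpow_natCast (n : ℝ) 2, ← Real.rpow_add hn',
    ← Real.rpow_natCast ((n : ℝ) ^ (1 / 4 : ℝ)), ← Real.rpow_mul hn'.le]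
  norm_num

/-- The convolution of `1 / j` with the harmonic numbers. -/
lemma sum_harmonicBelow_div_sub (n : ℕ) :
    ∑ m ∈ Finset.Ico 1 n, harmonicBelow m / ((n : ℝ) - m)
      = harmonicBelow n ^ 2 - ∑ m ∈ Finset.Ico 1 n, 1 / (m : ℝ) ^ 2 := by
  have reflect (f : ℕ → ℝ) (n : ℕ) :
      ∑ m ∈ Finset.Ico 1 n, f (n - m) = ∑ m ∈ Finset.Ico 1 n, f m := by
    rw [Finset.sum_Ico_reflect f 1 (by omega)]
    simp
  have conv (n : ℕ) : ∑ m ∈ Finset.Ico 1 n, harmonicBelow m / ((n : ℝ) - m)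
      = ∑ j ∈ Finset.Ico 1 n, harmonicBelow (n - j) / (j : ℝ) := by
    rw [← reflect]
    refine Finset.sum_congr rfl fun j hj => ?_
    rw [Nat.cast_sub (Finset.mem_Ico.1 hj).2.le, sub_sub_cancel]
  rw [conv]
  induction n with
  | zero => simp [harmonicBelow]
  | succ n ih =>
    rcases Nat.eq_zero_or_pos n with rfl | hn
    · simp [harmonicBelow]
    have hn' : (n : ℝ) ≠ 0 := by positivity
    have hstep : ∑ j ∈ Finset.Ico 1 n, harmonicBelow (n + 1 - j) / (j : ℝ)
        = ∑ j ∈ Finset.Ico 1 n, harmonicBelow (n - j) / (j : ℝ)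
          + (2 / n) * harmonicBelow n := by
      have hsum : (2 / n : ℝ) * harmonicBelow n
          = ∑ j ∈ Finset.Ico 1 n, (1 / n : ℝ) * (1 / ((n - j : ℕ) : ℝ) + 1 / (j : ℝ)) := by
        rw [← Finset.mul_sum, Finset.sum_add_distrib, reflect (fun j => 1 / (j : ℝ))]
        simp only [harmonicBelow]
        ring
      rw [hsum, ← Finset.sum_add_distrib]
      refine Finset.sum_congr rfl fun j hj => ?_
      obtain ⟨hj1, hjn⟩ := Finset.mem_Ico.1 hj
      have hj' : (j : ℝ) ≠ 0 := by positivity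
      have hnj : (n : ℝ) - j ≠ 0 := sub_ne_zero.2 (by exact_mod_cast hjn.ne')
      rw [Nat.sub_add_comm hjn.le, harmonicBelow_succ (by omega), Nat.cast_sub hjn.le]
      field_simp
      ring
    rw [Finset.sum_Ico_succ_top hn, Finset.sum_Ico_succ_top hn, hstep, ih,
      harmonicBelow_succ hn, Nat.add_sub_cancel_left, harmonicBelow_one]
    field_simp
    ring

lemma sum_inv_pow_mul_pow (k : ℕ) {m n : ℝ} (hm : m ≠ 0) (hn : n ≠ 0) (hmn : n - m ≠ 0) :
    ∑ a ∈ Finset.Icc 2 (k + 1), 1 / (n ^ a * m ^ (k + 2 - a))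
      = (1 / m ^ k - 1 / n ^ k) / (n * (n - m)) := by
  induction k with
  | zero => simp
  | succ k ih =>
    have hstep : ∑ a ∈ Finset.Icc 2 (k + 1), 1 / (n ^ a * m ^ (k + 1 + 2 - a))
        = (1 / m) * ∑ a ∈ Finset.Icc 2 (k + 1), 1 / (n ^ a * m ^ (k + 2 - a)) := by
      rw [Finset.mul_sum]
      refine Finset.sum_congr rfl fun a ha => ?_
      have ha := (Finset.mem_Icc.1 ha).2
      rw [show k + 1 + 2 - a = (k + 2 - a) + 1 by omega, pow_succ]
      field_simp
    rw [Finset.sum_Icc_succ_top (by omega), hstep, ih,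
      show k + 1 + 2 - (k + 1 + 1) = 1 by omega]
    field_simp
    ring

/-- The inner double sum of `ζ(a, b, 1)`. -/
lemma inner_eulerSum3 (a b n : ℕ) :
    ∑ n₂ ∈ Finset.Ico 1 n, ∑ n₃ ∈ Finset.Ico 1 n₂,
        (1 : ℝ) ^ n * 1 ^ n₂ * 1 ^ n₃ / ((n : ℝ) ^ a * (n₂ : ℝ) ^ b * (n₃ : ℝ) ^ 1)
      = ∑ m ∈ Finset.Ico 1 n, harmonicBelow m * (1 / ((n : ℝ) ^ a * (m : ℝ) ^ b)) := by
  refine Finset.sum_congr rfl fun m _ => ?_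
  rw [harmonicBelow, Finset.sum_mul]
  refine Finset.sum_congr rfl fun i _ => ?_
  simp only [one_pow, mul_one, pow_one]
  rw [one_div_mul_one_div, mul_comm (i : ℝ)]

lemma tendsto_sum_of_le_harmonicBelow_sq {f : ℕ → ℝ} (h0 : ∀ n, 0 ≤ f n)
    (hf : ∀ n, 1 ≤ n → f n ≤ harmonicBelow (n + 1) ^ 2 / (n : ℝ) ^ 2) :
    Tendsto (fun N : ℕ => ∑ n ∈ Finset.Icc 1 N, f n) atTop
      (nhds (limUnder atTop fun N : ℕ => ∑ n ∈ Finset.Icc 1 N, f n)) := by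
  have hs : Summable fun n => f (n + 1) :=
    Summable.of_nonneg_of_le (fun n => h0 _) (fun n => hf _ (by omega))
      ((summable_nat_add_iff 1).2 summable_harmonicBelow_sq_div_sq)
  refine tendsto_nhds_limUnder ⟨_, hs.hasSum.tendsto_sum_nat.congr fun N => ?_⟩
  rw [Finset.range_eq_Ico, Finset.sum_Ico_add' f 0 N 1]
  exact Finset.sum_congr (by ext; simp) fun _ _ => rfl

lemma tendsto_eulerSum2_s9 {a b : ℕ} (ha : 2 ≤ a) (hb : 1 ≤ b) :
    Tendsto (fun N : ℕ => ∑ n₁ ∈ Finset.Icc 1 N, ∑ n₂ ∈ Finset.Ico 1 n₁,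
      (1 : ℝ) ^ n₁ * 1 ^ n₂ / ((n₁ : ℝ) ^ a * (n₂ : ℝ) ^ b)) atTop
      (nhds (eulerSum2 a b 1 1)) := by
  refine tendsto_sum_of_le_harmonicBelow_sq
    (fun n => Finset.sum_nonneg fun _ _ => by positivity) fun n hn => ?_
  have hn' : (1 : ℝ) ≤ n := by exact_mod_cast hn
  calc _ ≤ ∑ m ∈ Finset.Ico 1 n, 1 / (m : ℝ) * (1 / (n : ℝ) ^ 2) := by
        refine Finset.sum_le_sum fun m hm => ?_
        have hm' : (1 : ℝ) ≤ m := by exact_mod_cast (Finset.mem_Ico.1 hm).1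
        rw [one_pow, one_pow, one_mul, one_div_mul_one_div, mul_comm (m : ℝ)]
        have h₁ := pow_le_pow_right₀ hn' ha
        have h₂ := le_self_pow₀ hm' (show b ≠ 0 by omega)
        gcongr
    _ = harmonicBelow n / (n : ℝ) ^ 2 := by
        rw [← Finset.sum_mul, mul_one_div, harmonicBelow]
    _ ≤ _ := by
        have h₁ := harmonicBelow_mono (Nat.le_succ n)
        have h₂ := le_self_pow₀ (one_le_harmonicBelow_succ hn) two_ne_zero
        have h₃ := h₁.trans h₂
        gcongr

lemma tendsto_eulerSum3 {a b : ℕ} (ha : 2 ≤ a) (hb : 1 ≤ b) :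
    Tendsto (fun N : ℕ => ∑ n ∈ Finset.Icc 1 N, ∑ m ∈ Finset.Ico 1 n,
      harmonicBelow m * (1 / ((n : ℝ) ^ a * (m : ℝ) ^ b))) atTop
      (nhds (eulerSum3 a b 1 1 1 1)) := by
  simp only [eulerSum3, inner_eulerSum3]
  refine tendsto_sum_of_le_harmonicBelow_sq
    (fun n => Finset.sum_nonneg fun m _ => mul_nonneg (harmonicBelow_nonneg m) (by positivity))
    fun n hn => ?_
  have hn' : (1 : ℝ) ≤ n := by exact_mod_cast hn
  have hH := harmonicBelow_nonneg n
  calc _ ≤ ∑ m ∈ Finset.Ico 1 n, harmonicBelow n / (n : ℝ) ^ 2 * (1 / (m : ℝ)) := by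
        refine Finset.sum_le_sum fun m hm => ?_
        have hm' : (1 : ℝ) ≤ m := by exact_mod_cast (Finset.mem_Ico.1 hm).1
        have h₀ := harmonicBelow_mono (Finset.mem_Ico.1 hm).2.le
        have h₁ := pow_le_pow_right₀ hn' ha
        have h₂ := le_self_pow₀ hm' (show b ≠ 0 by omega)
        rw [← mul_one_div (harmonicBelow n), mul_assoc, one_div_mul_one_div]
        gcongr
    _ = harmonicBelow n ^ 2 / (n : ℝ) ^ 2 := by
        rw [← Finset.mul_sum, ← harmonicBelow]
        ring
    _ ≤ _ := by
        have h₁ := harmonicBelow_mono (Nat.le_succ n)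
        gcongr

/-- The truncation error `∑_{m ≤ N} H_{m-1} (H_N - H_{N-m}) / m^(k+1)`. -/
noncomputable def truncationError (k N : ℕ) : ℝ :=
  ∑ m ∈ Finset.Icc 1 N,
    harmonicBelow m / (m : ℝ) ^ (k + 1) * (harmonicBelow (N + 1) - harmonicBelow (N + 1 - m))

lemma truncationError_succ (k N : ℕ) :
    truncationError k (N + 1) = truncationError k N
      + harmonicBelow (N + 1) * harmonicBelow (N + 2) / ((N + 1 : ℕ) : ℝ) ^ (k + 1)
      - ∑ m ∈ Finset.Ico 1 (N + 1), harmonicBelow m *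
          (1 / (m : ℝ) ^ k / (((N + 1 : ℕ) : ℝ) * (((N + 1 : ℕ) : ℝ) - m))) := by
  have hIcc : Finset.Ico 1 (N + 1) = Finset.Icc 1 N := by ext; simp
  rw [truncationError, Finset.sum_Icc_succ_top (by omega), hIcc, truncationError,
    add_sub_right_comm, ← Finset.sum_sub_distrib, show N + 1 + 1 - (N + 1) = 1 by omega,
    harmonicBelow_one, sub_zero, div_mul_eq_mul_div]
  congr 1
  refine Finset.sum_congr rfl fun m hm => ?_
  obtain ⟨hm1, hmN⟩ := Finset.mem_Icc.1 hm
  have hm' : (m : ℝ) ≠ 0 := by positivity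
  have hN : ((N + 1 : ℕ) : ℝ) ≠ 0 := by positivity
  have hNm : ((N + 1 : ℕ) : ℝ) - m ≠ 0 := sub_ne_zero.2 (by exact_mod_cast (by omega))
  rw [Nat.sub_add_comm (by omega : m ≤ N + 1), harmonicBelow_succ (by omega : 1 ≤ N + 1),
    harmonicBelow_succ (by omega : 1 ≤ N + 1 - m), Nat.cast_sub (by omega : m ≤ N + 1)]
  generalize ((N + 1 : ℕ) : ℝ) = x at *
  field_simp
  ring

lemma tendsto_harmonicBelow_sub (m : ℕ) :
    Tendsto (fun N : ℕ => harmonicBelow (N + 1) - harmonicBelow (N + 1 - m)) atTop (nhds 0) := by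
  induction m with
  | zero => simp
  | succ m ih =>
    have hstep : Tendsto (fun N : ℕ => harmonicBelow (N + 1 - m) - harmonicBelow (N + 1 - (m + 1)))
        atTop (nhds 0) := by
      rw [← tendsto_add_atTop_iff_nat (m + 1)]
      refine tendsto_one_div_add_atTop_nhds_zero_nat.congr fun N => ?_
      rw [show N + (m + 1) + 1 - m = (N + 1) + 1 by omega,
        show N + (m + 1) + 1 - (m + 1) = N + 1 by omega, harmonicBelow_succ (by omega)]
      push_cast
      ring
    simpa using ih.add hstep

lemma tendsto_truncationError {k : ℕ} (hk : 1 ≤ k) :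
    Tendsto (truncationError k) atTop (nhds 0) := by
  let F (N m : ℕ) : ℝ := if m ∈ Finset.Icc 1 N then
    harmonicBelow m / (m : ℝ) ^ (k + 1) * (harmonicBelow (N + 1) - harmonicBelow (N + 1 - m))
    else 0
  have hF : truncationError k = fun N => ∑' m, F N m := by
    funext N
    rw [tsum_eq_sum (s := Finset.Icc 1 N) fun m hm => if_neg hm]
    exact Finset.sum_congr rfl fun m hm => (if_pos hm).symm
  rw [hF, ← tsum_zero (α := ℝ) (β := ℕ)]
  refine tendsto_tsum_of_dominated_convergence summable_harmonicBelow_sq_div_sq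
    (fun m => ?_) (Eventually.of_forall fun N m => ?_)
  · have h := (tendsto_harmonicBelow_sub m).const_mul (harmonicBelow m / (m : ℝ) ^ (k + 1))
    rw [mul_zero] at h
    refine squeeze_zero_norm (fun N => ?_) (by simpa only [norm_mul, norm_zero] using h.norm)
    by_cases hm : m ∈ Finset.Icc 1 N
    · simp only [F, if_pos hm, norm_mul, le_refl]
    · simp only [F, if_neg hm, norm_zero]
      positivity
  · by_cases hm : m ∈ Finset.Icc 1 N
    · obtain ⟨hm1, hmN⟩ := Finset.mem_Icc.1 hm
      have hm' : (1 : ℝ) ≤ m := by exact_mod_cast hm1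
      have h₀ := harmonicBelow_nonneg m
      have h₁ := sub_nonneg.2 (harmonicBelow_mono (Nat.sub_le (N + 1) m))
      have h₂ : harmonicBelow (N + 1) - harmonicBelow (N + 1 - m) ≤ harmonicBelow (m + 1) := by
        have h := harmonicBelow_add_le (N - m) m
        rw [show N - m + m + 1 = N + 1 by omega, show N - m + 1 = N + 1 - m by omega] at h
        linarith
      have h₃ := harmonicBelow_mono (Nat.le_succ m)
      have h₄ := pow_le_pow_right₀ hm' (show 2 ≤ k + 1 by omega)
      simp only [F, if_pos hm]
      rw [Real.norm_of_nonneg (by positivity), sq, ← div_mul_eq_mul_div]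
      have h₅ := harmonicBelow_nonneg (m + 1)
      gcongr
    · simp only [F, if_neg hm, norm_zero]
      positivity

/-- The truncated form of the identity, with its explicit error. -/
lemma sum_truncated_add_truncationError (k N : ℕ) :
    ∑ a ∈ Finset.Icc 2 (k + 1), ∑ n ∈ Finset.Icc 1 N, ∑ m ∈ Finset.Ico 1 n,
        harmonicBelow m * (1 / ((n : ℝ) ^ a * (m : ℝ) ^ (k + 2 - a))) + truncationError k N
      = ∑ n ∈ Finset.Icc 1 N, ∑ m ∈ Finset.Ico 1 n,
          (1 : ℝ) ^ n * 1 ^ m / ((n : ℝ) ^ (k + 2) * (m : ℝ) ^ 1)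
        + ∑ n ∈ Finset.Icc 1 N, ∑ m ∈ Finset.Ico 1 n,
          (1 : ℝ) ^ n * 1 ^ m / ((n : ℝ) ^ (k + 1) * (m : ℝ) ^ 2) := by
  rw [Finset.sum_comm]
  induction N with
  | zero => simp [truncationError]
  | succ N ih =>
    simp only [Finset.sum_Icc_succ_top (by omega : 1 ≤ N + 1)]
    have hL : ∑ a ∈ Finset.Icc 2 (k + 1), ∑ m ∈ Finset.Ico 1 (N + 1), harmonicBelow m *
          (1 / (((N + 1 : ℕ) : ℝ) ^ a * (m : ℝ) ^ (k + 2 - a)))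
        = ∑ m ∈ Finset.Ico 1 (N + 1), harmonicBelow m *
            (1 / (m : ℝ) ^ k / (((N + 1 : ℕ) : ℝ) * (((N + 1 : ℕ) : ℝ) - m)))
          - 1 / ((N + 1 : ℕ) : ℝ) ^ (k + 1) *
            ∑ m ∈ Finset.Ico 1 (N + 1), harmonicBelow m / (((N + 1 : ℕ) : ℝ) - m) := by
      rw [Finset.sum_comm, Finset.mul_sum, ← Finset.sum_sub_distrib]
      refine Finset.sum_congr rfl fun m hm => ?_
      obtain ⟨hm1, hmN⟩ := Finset.mem_Ico.1 hm
      have hm' : (m : ℝ) ≠ 0 := by positivity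
      have hN : ((N + 1 : ℕ) : ℝ) ≠ 0 := by positivity
      have hNm : ((N + 1 : ℕ) : ℝ) - m ≠ 0 := sub_ne_zero.2 (by exact_mod_cast hmN.ne')
      rw [← Finset.mul_sum, sum_inv_pow_mul_pow k hm' hN hNm]
      generalize ((N + 1 : ℕ) : ℝ) = x at *
      field_simp
      ring
    have hR₁ : ∑ m ∈ Finset.Ico 1 (N + 1),
          (1 : ℝ) ^ (N + 1) * 1 ^ m / (((N + 1 : ℕ) : ℝ) ^ (k + 2) * (m : ℝ) ^ 1)
        = 1 / ((N + 1 : ℕ) : ℝ) ^ (k + 2) * harmonicBelow (N + 1) := by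
      rw [harmonicBelow, Finset.mul_sum]
      simp only [one_pow, mul_one, pow_one, one_div_mul_one_div]
    have hR₂ : ∑ m ∈ Finset.Ico 1 (N + 1),
          (1 : ℝ) ^ (N + 1) * 1 ^ m / (((N + 1 : ℕ) : ℝ) ^ (k + 1) * (m : ℝ) ^ 2)
        = 1 / ((N + 1 : ℕ) : ℝ) ^ (k + 1) * ∑ m ∈ Finset.Ico 1 (N + 1), 1 / (m : ℝ) ^ 2 := by
      rw [Finset.mul_sum]
      simp only [one_pow, mul_one, one_div_mul_one_div]
    have hH : harmonicBelow (N + 1) * harmonicBelow (N + 2) / ((N + 1 : ℕ) : ℝ) ^ (k + 1)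
        = 1 / ((N + 1 : ℕ) : ℝ) ^ (k + 1) * harmonicBelow (N + 1) ^ 2
          + 1 / ((N + 1 : ℕ) : ℝ) ^ (k + 2) * harmonicBelow (N + 1) := by
      rw [harmonicBelow_succ (by omega : 1 ≤ N + 1)]
      have hN : ((N + 1 : ℕ) : ℝ) ≠ 0 := by positivity
      generalize ((N + 1 : ℕ) : ℝ) = x at *
      field_simp
      ring
    rw [hL, hR₁, hR₂, truncationError_succ, hH, sum_harmonicBelow_div_sub]
    linear_combination ih

/-- For `w ≥ 4`, with `u = w − 2`, `v = w − 1`: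
`∑_{a+b=w−1, a≥2} ζ(a,b,1) = ζ(v,1) + ζ(u,2)`. -/
theorem sum_zeta_ab1 (w : ℕ) (hw : 4 ≤ w) :
    ∑ a ∈ Finset.Icc 2 (w - 2), eulerSum3 a (w - 1 - a) 1 1 1 1
      = eulerSum2 (w - 1) 1 1 1 + eulerSum2 (w - 2) 2 1 1 := by
  obtain ⟨k, rfl⟩ : ∃ k, w = k + 3 := ⟨w - 3, by omega⟩
  rw [show k + 3 - 2 = k + 1 by omega, show k + 3 - 1 = k + 2 by omega]
  have hL := (tendsto_finsetSum (Finset.Icc 2 (k + 1)) fun a ha =>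
    tendsto_eulerSum3 (b := k + 2 - a) (Finset.mem_Icc.1 ha).1
      (by have := (Finset.mem_Icc.1 ha).2; omega)).add
    (tendsto_truncationError (k := k) (by omega))
  have hR := (tendsto_eulerSum2_s9 (a := k + 2) (b := 1) (by omega) le_rfl).add
    (tendsto_eulerSum2_s9 (a := k + 1) (b := 2) (by omega) (by omega))
  rw [add_zero] at hL
  exact tendsto_nhds_unique hL (hR.congr fun N => (sum_truncated_add_truncationError k N).symm)
end

section
/- For every integer w ≥ 4, with u = w−2, the triple T-values with last entry 1 satisfy ∑_{a+b=w−1, a≥2, b≥1} T(a,b,1) = 2·T(u,2) + 4·( ζ(u,1̄,1̄) + ζ(ū,1,1) − ζ(ū,1,1̄) − ζ(u,1̄,1) ). -/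
open Filter

namespace TripleT

/-- Reciprocals of odd numbers, extended by zero. -/
noncomputable def oddInv (j : ℕ) : ℝ := if j % 2 = 1 then 1 / (j : ℝ) else 0

/-- Odd harmonic number `∑_{j < n, j odd} 1 / j`. -/
noncomputable def oddHarm (n : ℕ) : ℝ := ∑ j ∈ Finset.Ico 1 n, oddInv j

/-- Harmonic number `∑_{j < n} 1 / j`. -/
noncomputable def harm (n : ℕ) : ℝ := ∑ j ∈ Finset.Ico 1 n, 1 / (j : ℝ)

lemma oddInv_nonneg (j : ℕ) : 0 ≤ oddInv j := by
  unfold oddInv; split_ifs <;> positivity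

lemma oddInv_le (j : ℕ) : oddInv j ≤ 1 / (j : ℝ) := by
  unfold oddInv; split_ifs
  · exact le_rfl
  · positivity

lemma oddHarm_nonneg (n : ℕ) : 0 ≤ oddHarm n := Finset.sum_nonneg fun j _ => oddInv_nonneg j

lemma harm_nonneg (n : ℕ) : 0 ≤ harm n := Finset.sum_nonneg fun j _ => by positivity

lemma oddHarm_le_harm (n : ℕ) : oddHarm n ≤ harm n := Finset.sum_le_sum fun j _ => oddInv_le j

lemma harm_mono : Monotone harm := fun _ _ h =>
  Finset.sum_le_sum_of_subset_of_nonneg (Finset.Ico_subset_Ico_right h) fun _ _ _ => by positivity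

lemma oddHarm_succ (n : ℕ) : oddHarm (n + 1) = oddHarm n + oddInv n := by
  rcases Nat.eq_zero_or_pos n with rfl | h
  · simp [oddHarm, oddInv]
  · exact Finset.sum_Ico_succ_top h _

lemma oddHarm_mono : Monotone oddHarm := monotone_nat_of_le_succ fun n => by
  rw [oddHarm_succ]; linarith [oddInv_nonneg n]

lemma harm_le_rpow (n : ℕ) (hn : 1 ≤ n) : harm n ≤ 5 * (n : ℝ) ^ (1 / 4 : ℝ) := by
  have h1 : harm n ≤ 1 + Real.log n := by
    refine le_trans (harm_mono (Nat.le_succ n)) ?_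
    have := harmonic_le_one_add_log n
    rw [harmonic_eq_sum_Icc] at this
    push_cast at this
    have h : Finset.Ico 1 (n + 1) = Finset.Icc 1 n := rfl
    simpa [harm, h] using this
  have h2 := Real.log_le_rpow_div (x := (n : ℝ)) (by positivity) (show (0 : ℝ) < 1 / 4 by norm_num)
  have h3 : (1 : ℝ) ≤ (n : ℝ) ^ (1 / 4 : ℝ) :=
    Real.one_le_rpow (by exact_mod_cast hn) (by norm_num)
  have h4 : (n : ℝ) ^ (1 / 4 : ℝ) / (1 / 4) = 4 * (n : ℝ) ^ (1 / 4 : ℝ) := by ring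
  linarith

lemma summable_harm_sq : Summable fun n : ℕ => harm n ^ 2 / (n : ℝ) ^ 2 := by
  have hs : Summable fun n : ℕ => 25 * (1 / (n : ℝ) ^ (3 / 2 : ℝ)) :=
    (Real.summable_one_div_nat_rpow.2 (by norm_num)).mul_left 25
  refine Summable.of_nonneg_of_le (fun n => by positivity) (fun n => ?_) hs
  rcases Nat.eq_zero_or_pos n with rfl | hn
  · simp
  have hp : (0 : ℝ) < n := by exact_mod_cast hn
  have h1 : harm n ^ 2 ≤ (5 * (n : ℝ) ^ (1 / 4 : ℝ)) ^ 2 :=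
    pow_le_pow_left₀ (harm_nonneg n) (harm_le_rpow n hn) 2
  have h2 : (5 * (n : ℝ) ^ (1 / 4 : ℝ)) ^ 2 = 25 * (n : ℝ) ^ (1 / 2 : ℝ) := by
    rw [mul_pow, ← Real.rpow_natCast, ← Real.rpow_natCast, ← Real.rpow_mul hp.le]
    norm_num
  have h3 : (n : ℝ) ^ 2 = (n : ℝ) ^ (1 / 2 : ℝ) * (n : ℝ) ^ (3 / 2 : ℝ) := by
    rw [← Real.rpow_natCast, ← Real.rpow_add hp]; norm_num
  calc harm n ^ 2 / (n : ℝ) ^ 2 ≤ 25 * (n : ℝ) ^ (1 / 2 : ℝ) / (n : ℝ) ^ 2 := by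
        rw [← h2]; gcongr
    _ = 25 * (1 / (n : ℝ) ^ (3 / 2 : ℝ)) := by
        rw [h3]
        have := Real.rpow_pos_of_pos hp (1 / 2)
        have := Real.rpow_pos_of_pos hp (3 / 2)
        field_simp

lemma summable_of_le_harm_sq {F : ℕ → ℝ} (C : ℝ)
    (h : ∀ n, |F n| ≤ C * (harm n ^ 2 / (n : ℝ) ^ 2)) : Summable F :=
  Summable.of_norm_bounded (summable_harm_sq.mul_left C) h

lemma tendsto_sum_Icc {F : ℕ → ℝ} (hF : Summable F) (h0 : F 0 = 0) :
    Tendsto (fun N : ℕ => ∑ m ∈ Finset.Icc 1 N, F m) atTop (nhds (∑' m, F m)) := by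
  have h := hF.hasSum.tendsto_sum_nat.comp (tendsto_add_atTop_nat 1)
  refine h.congr fun N => ?_
  simp only [Function.comp]
  rw [Finset.range_eq_Ico, Finset.sum_eq_sum_Ico_succ_bot (Nat.succ_pos N), h0, zero_add]
  rfl

lemma inv_pow_le_inv_sq {s m : ℕ} (hs : 2 ≤ s) (hm : 1 ≤ m) :
    1 / (m : ℝ) ^ s ≤ 1 / (m : ℝ) ^ 2 := by
  have hm' : (1 : ℝ) ≤ m := by exact_mod_cast hm
  exact one_div_le_one_div_of_le (by positivity) (pow_le_pow_right₀ hm' hs)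

lemma summable_depth_three {f : ℕ → ℕ → ℕ → ℝ} (C : ℝ) (hC : 0 ≤ C)
    (h : ∀ m n k, 1 ≤ k → k < n → n < m →
      |f m n k| ≤ C * (1 / (m : ℝ) ^ 2 * (1 / (n : ℝ)) * (1 / (k : ℝ)))) :
    Summable fun m => ∑ n ∈ Finset.Ico 1 m, ∑ k ∈ Finset.Ico 1 n, f m n k := by
  refine summable_of_le_harm_sq C fun m => ?_
  calc |∑ n ∈ Finset.Ico 1 m, ∑ k ∈ Finset.Ico 1 n, f m n k|
      ≤ ∑ n ∈ Finset.Ico 1 m, ∑ k ∈ Finset.Ico 1 n, |f m n k| :=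
        (Finset.abs_sum_le_sum_abs _ _).trans
          (Finset.sum_le_sum fun n _ => Finset.abs_sum_le_sum_abs _ _)
    _ ≤ ∑ n ∈ Finset.Ico 1 m, ∑ k ∈ Finset.Ico 1 n,
          C * (1 / (m : ℝ) ^ 2 * (1 / (n : ℝ)) * (1 / (k : ℝ))) := by
        refine Finset.sum_le_sum fun n hn => Finset.sum_le_sum fun k hk => ?_
        rw [Finset.mem_Ico] at hn hk
        exact h m n k hk.1 hk.2 hn.2
    _ = C * (1 / (m : ℝ) ^ 2 * ∑ n ∈ Finset.Ico 1 m, 1 / (n : ℝ) * harm n) := by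
        simp only [harm, Finset.mul_sum, mul_assoc]
    _ ≤ C * (1 / (m : ℝ) ^ 2 * ∑ n ∈ Finset.Ico 1 m, 1 / (n : ℝ) * harm m) := by
        gcongr with n hn
        exact harm_mono (Finset.mem_Ico.1 hn).2.le
    _ = C * (harm m ^ 2 / (m : ℝ) ^ 2) := by
        rw [← Finset.sum_mul]
        change C * (1 / (m : ℝ) ^ 2 * (harm m * harm m)) = _
        ring

/-- Summand of `eulerSum3` with respect to its outermost index. -/
noncomputable def eulerTerm (u : ℕ) (e₁ e₂ e₃ : ℝ) (m : ℕ) : ℝ :=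
  ∑ n ∈ Finset.Ico 1 m, ∑ k ∈ Finset.Ico 1 n,
    e₁ ^ m * e₂ ^ n * e₃ ^ k / ((m : ℝ) ^ u * (n : ℝ) ^ 1 * (k : ℝ) ^ 1)

/-- Summand of `tValue3` with respect to its outermost index. -/
noncomputable def tTerm (a b m : ℕ) : ℝ :=
  ∑ n ∈ Finset.Ico 1 m, ∑ k ∈ Finset.Ico 1 n,
    if m % 2 = 1 ∧ n % 2 = 0 ∧ k % 2 = 1 then
      8 / ((m : ℝ) ^ a * (n : ℝ) ^ b * (k : ℝ) ^ 1) else 0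

/-- Summand of `tValue2 u 2` with respect to its outermost index. -/
noncomputable def tTermTwo (u m : ℕ) : ℝ :=
  ∑ k ∈ Finset.Ico 1 m,
    if m % 2 = 0 ∧ k % 2 = 1 then 4 / ((m : ℝ) ^ u * (k : ℝ) ^ 2) else 0

lemma summable_eulerTerm {u : ℕ} (hu : 2 ≤ u) {e₁ e₂ e₃ : ℝ}
    (h₁ : |e₁| = 1) (h₂ : |e₂| = 1) (h₃ : |e₃| = 1) : Summable (eulerTerm u e₁ e₂ e₃) := by
  refine summable_depth_three 1 zero_le_one fun m n k hk hkn hnm => ?_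
  have hm : 1 ≤ m := by omega
  have := inv_pow_le_inv_sq hu hm
  calc |e₁ ^ m * e₂ ^ n * e₃ ^ k / ((m : ℝ) ^ u * (n : ℝ) ^ 1 * (k : ℝ) ^ 1)|
      = 1 / (m : ℝ) ^ u * (1 / (n : ℝ)) * (1 / (k : ℝ)) := by
        rw [abs_div, abs_mul, abs_mul, abs_pow, abs_pow, abs_pow, h₁, h₂, h₃,
          abs_of_nonneg (a := (m : ℝ) ^ u * (n : ℝ) ^ 1 * (k : ℝ) ^ 1) (by positivity)]
        simp only [one_pow, pow_one, mul_one, one_div, mul_inv]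
    _ ≤ 1 * (1 / (m : ℝ) ^ 2 * (1 / (n : ℝ)) * (1 / (k : ℝ))) := by
        rw [one_mul]; gcongr

lemma summable_tTerm {a b : ℕ} (ha : 2 ≤ a) (hb : 1 ≤ b) : Summable (tTerm a b) := by
  refine summable_depth_three 8 (by norm_num) fun m n k hk hkn hnm => ?_
  have hm : 1 ≤ m := by omega
  have hn : (1 : ℝ) ≤ n := by exact_mod_cast (by omega : 1 ≤ n)
  have h1 := inv_pow_le_inv_sq ha hm
  have h2 : 1 / (n : ℝ) ^ b ≤ 1 / (n : ℝ) :=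
    one_div_le_one_div_of_le (by positivity) (le_self_pow₀ hn (by omega))
  split_ifs
  · rw [abs_of_nonneg (by positivity)]
    calc 8 / ((m : ℝ) ^ a * (n : ℝ) ^ b * (k : ℝ) ^ 1)
        = 8 * (1 / (m : ℝ) ^ a * (1 / (n : ℝ) ^ b) * (1 / (k : ℝ))) := by
          simp only [pow_one, one_mul, mul_inv, div_eq_mul_inv]
      _ ≤ _ := by gcongr
  · rw [abs_zero]; positivity

lemma sum_oddInv_sq_le (m : ℕ) : ∑ k ∈ Finset.Ico 1 m, oddInv k ^ 2 ≤ harm m ^ 2 :=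
  (Finset.sum_sq_le_sq_sum_of_nonneg fun k _ => oddInv_nonneg k).trans
    (pow_le_pow_left₀ (oddHarm_nonneg m) (oddHarm_le_harm m) 2)

lemma tTermTwo_eq (u m : ℕ) : tTermTwo u m =
    if m % 2 = 0 then 4 * (1 / (m : ℝ) ^ u) * ∑ k ∈ Finset.Ico 1 m, oddInv k ^ 2 else 0 := by
  unfold tTermTwo
  split_ifs with h
  · rw [Finset.mul_sum]
    refine Finset.sum_congr rfl fun k _ => ?_
    unfold oddInv
    by_cases hk : k % 2 = 1
    · simp only [h, hk, and_self, if_true, div_eq_mul_inv, mul_inv, one_mul, inv_pow]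
      ring
    · simp [hk]
  · simp [h]

lemma summable_tTermTwo {u : ℕ} (hu : 2 ≤ u) : Summable (tTermTwo u) := by
  refine summable_of_le_harm_sq 4 fun m => ?_
  rw [tTermTwo_eq]
  rcases Nat.eq_zero_or_pos m with rfl | hm
  · simp [harm]
  have hs : 0 ≤ ∑ k ∈ Finset.Ico 1 m, oddInv k ^ 2 := Finset.sum_nonneg fun k _ => sq_nonneg _
  split_ifs
  · rw [abs_of_nonneg (by positivity)]
    calc 4 * (1 / (m : ℝ) ^ u) * ∑ k ∈ Finset.Ico 1 m, oddInv k ^ 2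
        ≤ 4 * (1 / (m : ℝ) ^ 2) * harm m ^ 2 :=
          mul_le_mul (by gcongr 4 * ?_; exact inv_pow_le_inv_sq hu hm) (sum_oddInv_sq_le m) hs
            (by positivity)
      _ = _ := by ring
  · rw [abs_zero]; positivity

/-- `8 n^{-u} (∑_{j odd < n} 1/j)²` for even `n`, extended by zero. -/
noncomputable def evenSq (u n : ℕ) : ℝ :=
  if n % 2 = 0 then 8 * (1 / (n : ℝ) ^ u) * oddHarm n ^ 2 else 0

/-- Summand of `2 T(u,1,1)` with respect to its outermost index. -/
noncomputable def oddNested (u m : ℕ) : ℝ :=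
  if m % 2 = 1 then
    16 * (1 / (m : ℝ) ^ u) *
      ∑ s ∈ Finset.Ico 1 m, if s % 2 = 0 then 1 / (s : ℝ) * oddHarm s else 0
  else 0

lemma summable_evenSq {u : ℕ} (hu : 2 ≤ u) : Summable (evenSq u) := by
  refine summable_of_le_harm_sq 8 fun m => ?_
  unfold evenSq
  rcases Nat.eq_zero_or_pos m with rfl | hm
  · simp [harm, oddHarm]
  split_ifs
  · rw [abs_of_nonneg (by positivity)]
    calc 8 * (1 / (m : ℝ) ^ u) * oddHarm m ^ 2 ≤ 8 * (1 / (m : ℝ) ^ 2) * harm m ^ 2 :=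
          mul_le_mul (by gcongr 8 * ?_; exact inv_pow_le_inv_sq hu hm)
            (pow_le_pow_left₀ (oddHarm_nonneg m) (oddHarm_le_harm m) 2) (by positivity)
            (by positivity)
      _ = _ := by ring
  · rw [abs_zero]; positivity

lemma oddNested_eq (u m : ℕ) : oddNested u m = 2 * tTerm u 1 m := by
  unfold oddNested tTerm
  split_ifs with h
  · simp only [Finset.mul_sum]
    refine Finset.sum_congr rfl fun n _ => ?_
    by_cases hn : n % 2 = 0
    · simp only [hn, h, if_true, true_and, oddHarm, Finset.mul_sum]
      refine Finset.sum_congr rfl fun k _ => ?_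
      unfold oddInv
      split_ifs
      · simp only [pow_one, mul_inv, div_eq_mul_inv]; ring
      · simp
    · simp [hn]
  · simp [h]

lemma summable_oddNested {u : ℕ} (hu : 2 ≤ u) : Summable (oddNested u) := by
  simp only [funext (oddNested_eq u)]
  exact (summable_tTerm hu le_rfl).mul_left 2

lemma sq_oddHarm (m : ℕ) : oddHarm m ^ 2 =
    ∑ k ∈ Finset.Ico 1 m, oddInv k ^ 2 + 2 * ∑ n ∈ Finset.Ico 1 m, oddInv n * oddHarm n := by
  induction m with
  | zero => simp [oddHarm]
  | succ m ih =>
    rcases Nat.eq_zero_or_pos m with rfl | h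
    · simp [oddHarm]
    rw [oddHarm_succ, Finset.sum_Ico_succ_top h, Finset.sum_Ico_succ_top h]
    linear_combination ih

lemma euler_combination (u m : ℕ) :
    4 * (eulerTerm u 1 (-1) (-1) m + eulerTerm u (-1) 1 1 m
      - eulerTerm u (-1) 1 (-1) m - eulerTerm u 1 (-1) 1 m)
    = (if m % 2 = 0 then
        16 * (1 / (m : ℝ) ^ u) * ∑ n ∈ Finset.Ico 1 m, oddInv n * oddHarm n else 0)
      - oddNested u m := by
  unfold eulerTerm oddNested
  simp only [← Finset.sum_add_distrib, ← Finset.sum_sub_distrib, Finset.mul_sum]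
  rcases Nat.mod_two_eq_zero_or_one m with h | h
  · simp only [h, if_true, zero_ne_one, if_false, sub_zero, oddHarm, Finset.mul_sum]
    refine Finset.sum_congr rfl fun n _ => Finset.sum_congr rfl fun k _ => ?_
    have hm : (-1 : ℝ) ^ m = 1 := (Nat.even_iff.2 h).neg_one_pow
    rcases Nat.mod_two_eq_zero_or_one n with hn | hn <;>
    rcases Nat.mod_two_eq_zero_or_one k with hk | hk <;>
    first
    | have hn' : (-1 : ℝ) ^ n = 1 := (Nat.even_iff.2 hn).neg_one_pow
    | have hn' : (-1 : ℝ) ^ n = -1 := (Nat.odd_iff.2 hn).neg_one_pow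
    all_goals
    first
    | have hk' : (-1 : ℝ) ^ k = 1 := (Nat.even_iff.2 hk).neg_one_pow
    | have hk' : (-1 : ℝ) ^ k = -1 := (Nat.odd_iff.2 hk).neg_one_pow
    all_goals
      simp only [oddInv, hn, hk, hm, hn', hk', one_pow, pow_one, if_true, zero_ne_one, if_false,
        div_eq_mul_inv, mul_inv]
      ring
  · simp only [h, if_true, one_ne_zero, if_false, zero_sub]
    rw [← Finset.sum_neg_distrib]
    refine Finset.sum_congr rfl fun n _ => ?_
    have hm : (-1 : ℝ) ^ m = -1 := (Nat.odd_iff.2 h).neg_one_pow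
    rcases Nat.mod_two_eq_zero_or_one n with hn | hn
    · have hn' : (-1 : ℝ) ^ n = 1 := (Nat.even_iff.2 hn).neg_one_pow
      simp only [hn, if_true, oddHarm, Finset.mul_sum, ← Finset.sum_neg_distrib]
      refine Finset.sum_congr rfl fun k _ => ?_
      rcases Nat.mod_two_eq_zero_or_one k with hk | hk
      · have hk' : (-1 : ℝ) ^ k = 1 := (Nat.even_iff.2 hk).neg_one_pow
        simp [oddInv, hk, hm, hn', hk']
      · have hk' : (-1 : ℝ) ^ k = -1 := (Nat.odd_iff.2 hk).neg_one_pow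
        simp only [oddInv, hk, hm, hn', hk', one_pow, pow_one, if_true, div_eq_mul_inv, mul_inv]
        ring
    · have hn' : (-1 : ℝ) ^ n = -1 := (Nat.odd_iff.2 hn).neg_one_pow
      simp only [hn, one_ne_zero, if_false, mul_zero, neg_zero]
      refine Finset.sum_eq_zero fun k _ => ?_
      rw [hm, hn']
      simp only [one_pow, div_eq_mul_inv]
      ring

lemma right_side_term (u m : ℕ) :
    2 * tTermTwo u m + 4 * (eulerTerm u 1 (-1) (-1) m + eulerTerm u (-1) 1 1 m
      - eulerTerm u (-1) 1 (-1) m - eulerTerm u 1 (-1) 1 m) = evenSq u m - oddNested u m := by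
  rw [euler_combination, tTermTwo_eq, evenSq, sq_oddHarm]
  split_ifs <;> ring

lemma geom_sum_two_variables {x y : ℝ} (hx : x ≠ 0) (hy : y ≠ 0) (hxy : x - y ≠ 0) (u : ℕ)
    (hu : 1 ≤ u) :
    ∑ a ∈ Finset.Icc 2 u, 1 / (x ^ a * y ^ (u + 1 - a))
      = 1 / y ^ u * (1 / (x - y) - 1 / x) - 1 / (x ^ u * (x - y)) := by
  induction u, hu using Nat.le_induction with
  | base => simp; field_simp; ring
  | succ u hu ih =>
    rw [Finset.sum_Icc_succ_top (by omega)]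
    have : ∑ a ∈ Finset.Icc 2 u, 1 / (x ^ a * y ^ (u + 1 + 1 - a))
        = (∑ a ∈ Finset.Icc 2 u, 1 / (x ^ a * y ^ (u + 1 - a))) * (1 / y) := by
      rw [Finset.sum_mul]
      refine Finset.sum_congr rfl fun a ha => ?_
      rw [Finset.mem_Icc] at ha
      rw [show u + 1 + 1 - a = (u + 1 - a) + 1 by omega, pow_succ]
      field_simp
    rw [this, ih, show u + 1 + 1 - (u + 1) = 1 by omega]
    field_simp
    ring

lemma sum_reflect_oddInv (s : ℕ) (hs : s % 2 = 0) :
    ∑ k ∈ Finset.Ico 1 s, oddInv (s - k) = oddHarm s := by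
  rcases Nat.eq_zero_or_pos s with rfl | h
  · simp [oddHarm]
  · have := Finset.sum_Ico_reflect oddInv 1 (show s ≤ s + 1 by omega)
    simpa [oddHarm] using this

lemma sum_convolution_oddInv (s : ℕ) (hs : s % 2 = 0) :
    ∑ k ∈ Finset.Ico 1 s, oddInv (s - k) * oddInv k = 2 * (1 / (s : ℝ) * oddHarm s) := by
  have h : ∀ k ∈ Finset.Ico 1 s,
      oddInv (s - k) * oddInv k = 1 / (s : ℝ) * (oddInv (s - k) + oddInv k) := by
    intro k hk
    rw [Finset.mem_Ico] at hk
    unfold oddInv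
    by_cases hk2 : k % 2 = 1
    · have h2 : (s - k) % 2 = 1 := by omega
      have h3 : (0 : ℝ) < k := by exact_mod_cast (by omega : 0 < k)
      have h4 : (k : ℝ) < s := by exact_mod_cast hk.2
      have h5 : (s : ℝ) - k ≠ 0 := by linarith
      have h6 : (s : ℝ) ≠ 0 := by linarith
      simp only [hk2, h2, if_true]
      rw [Nat.cast_sub hk.2.le]
      field_simp
      ring
    · have h2 : ¬ (s - k) % 2 = 1 := by omega
      simp [hk2, h2]
  rw [Finset.sum_congr rfl h, ← Finset.mul_sum, Finset.sum_add_distrib, sum_reflect_oddInv s hs]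
  change 1 / (s : ℝ) * (oddHarm s + oddHarm s) = _
  ring

lemma sum_convolution_oddHarm (m : ℕ) (hm : m % 2 = 1) :
    ∑ n ∈ Finset.Ico 1 m, (if n % 2 = 0 then 1 / ((m : ℝ) - n) * oddHarm n else 0)
      = 2 * ∑ s ∈ Finset.Ico 1 m, if s % 2 = 0 then 1 / (s : ℝ) * oddHarm s else 0 := by
  have h1 : ∀ n ∈ Finset.Ico 1 m, (if n % 2 = 0 then 1 / ((m : ℝ) - n) * oddHarm n else 0)
      = ∑ k ∈ Finset.Ico 1 n, oddInv (m - n) * oddInv k := by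
    intro n hn
    rw [Finset.mem_Ico] at hn
    rw [← Finset.mul_sum]
    change _ = oddInv (m - n) * oddHarm n
    unfold oddInv
    by_cases h : n % 2 = 0
    · rw [if_pos h, if_pos (by omega), Nat.cast_sub hn.2.le]
    · rw [if_neg h, if_neg (by omega), zero_mul]
  have h2 : ∀ s ∈ Finset.Ico 1 m, ∑ k ∈ Finset.Ico 1 s, oddInv (s - k) * oddInv k
      = 2 * if s % 2 = 0 then 1 / (s : ℝ) * oddHarm s else 0 := by
    intro s hs
    split_ifs with h
    · exact sum_convolution_oddInv s h
    · rw [mul_zero]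
      refine Finset.sum_eq_zero fun k hk => ?_
      rw [Finset.mem_Ico] at hk
      unfold oddInv
      by_cases hk2 : k % 2 = 1
      · rw [if_neg (by omega : ¬ (s - k) % 2 = 1), zero_mul]
      · rw [if_neg hk2, mul_zero]
  rw [Finset.sum_congr rfl h1, Finset.mul_sum, ← Finset.sum_congr rfl h2, Finset.sum_sigma',
    Finset.sum_sigma']
  refine Finset.sum_bij' (fun p _ => ⟨m - p.1 + p.2, p.2⟩) (fun p _ => ⟨m - p.1 + p.2, p.2⟩)
    ?_ ?_ ?_ ?_ ?_
  · rintro ⟨n, k⟩ h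
    simp only [Finset.mem_sigma, Finset.mem_Ico] at h ⊢
    omega
  · rintro ⟨n, k⟩ h
    simp only [Finset.mem_sigma, Finset.mem_Ico] at h ⊢
    omega
  · rintro ⟨n, k⟩ h
    simp only [Finset.mem_sigma, Finset.mem_Ico] at h
    simp only [Sigma.mk.injEq, heq_eq_eq, and_true]
    omega
  · rintro ⟨n, k⟩ h
    simp only [Finset.mem_sigma, Finset.mem_Ico] at h
    simp only [Sigma.mk.injEq, heq_eq_eq, and_true]
    omega
  · rintro ⟨n, k⟩ h
    simp only [Finset.mem_sigma, Finset.mem_Ico] at h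
    simp only [Nat.add_sub_cancel]

/-- The difference `1/(m-n) - 1/m` for odd `m`, extended by zero. -/
noncomputable def gap (n m : ℕ) : ℝ := if m % 2 = 1 then 1 / ((m : ℝ) - n) - 1 / (m : ℝ) else 0

/-- The coefficient `8 n^{-u} ∑_{j odd < n} 1/j` for even `n`, extended by zero. -/
noncomputable def evenCoeff (u n : ℕ) : ℝ :=
  if n % 2 = 0 then 8 * (1 / (n : ℝ) ^ u) * oddHarm n else 0

lemma left_side_term (u m : ℕ) (hu : 1 ≤ u) :
    ∑ a ∈ Finset.Icc 2 u, tTerm a (u + 1 - a) m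
      = ∑ n ∈ Finset.Ico 1 m, evenCoeff u n * gap n m - oddNested u m := by
  by_cases hm : m % 2 = 1
  · have key : ∀ n ∈ Finset.Ico 1 m,
        ∑ a ∈ Finset.Icc 2 u, ∑ k ∈ Finset.Ico 1 n,
          (if m % 2 = 1 ∧ n % 2 = 0 ∧ k % 2 = 1 then
            8 / ((m : ℝ) ^ a * (n : ℝ) ^ (u + 1 - a) * (k : ℝ) ^ 1) else 0)
        = evenCoeff u n * gap n m
          - 8 * (1 / (m : ℝ) ^ u) * (if n % 2 = 0 then 1 / ((m : ℝ) - n) * oddHarm n else 0) := by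
      intro n hn
      rw [Finset.mem_Ico] at hn
      by_cases hn2 : n % 2 = 0
      · have h3 : (0 : ℝ) < n := by exact_mod_cast (by omega : 0 < n)
        have h4 : (n : ℝ) < m := by exact_mod_cast hn.2
        have h5 : ∀ a, ∑ k ∈ Finset.Ico 1 n,
            (if m % 2 = 1 ∧ n % 2 = 0 ∧ k % 2 = 1 then
              8 / ((m : ℝ) ^ a * (n : ℝ) ^ (u + 1 - a) * (k : ℝ) ^ 1) else 0)
            = 1 / ((m : ℝ) ^ a * (n : ℝ) ^ (u + 1 - a)) * (8 * oddHarm n) := by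
          intro a
          rw [oddHarm, Finset.mul_sum, Finset.mul_sum]
          refine Finset.sum_congr rfl fun k _ => ?_
          unfold oddInv
          by_cases hk : k % 2 = 1
          · simp only [hm, hn2, hk, and_self, if_true, pow_one, mul_inv, div_eq_mul_inv]
            ring
          · simp [hk]
        simp only [h5]
        rw [← Finset.sum_mul, geom_sum_two_variables (by linarith) h3.ne' (by linarith) u hu,
          evenCoeff, gap, if_pos hn2, if_pos hm, if_pos hn2]
        simp only [one_div, mul_inv]
        ring
      · simp [hn2, evenCoeff]
    simp only [tTerm]
    rw [Finset.sum_comm, Finset.sum_congr rfl key, Finset.sum_sub_distrib, ← Finset.mul_sum,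
      sum_convolution_oddHarm m hm, oddNested, if_pos hm]
    ring
  · simp [tTerm, gap, oddNested, hm]

/-- `∑_{n < m ≤ N} gap n m`. -/
noncomputable def gapSum (n N : ℕ) : ℝ := ∑ m ∈ Finset.Ioc n N, gap n m

lemma gapSum_eq (n N : ℕ) (hn : n % 2 = 0) (h : n ≤ N) :
    gapSum n N = oddHarm n - (oddHarm (N + 1) - oddHarm (N + 1 - n)) := by
  induction N, h using Nat.le_induction with
  | base =>
    rw [oddHarm_succ, show n + 1 - n = 1 by omega]
    simp [gapSum, oddHarm, oddInv, hn]
  | succ N h ih =>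
    have hs : gapSum n (N + 1) = gapSum n N + gap n (N + 1) :=
      Finset.sum_Ioc_succ_top (by omega) _
    rw [hs, ih, oddHarm_succ (N + 1), show N + 1 + 1 - n = N + 1 - n + 1 by omega,
      oddHarm_succ (N + 1 - n)]
    unfold gap oddInv
    by_cases hN : (N + 1) % 2 = 1
    · rw [if_pos hN, if_pos hN, if_pos (by omega), Nat.cast_sub (by omega)]
      ring
    · rw [if_neg hN, if_neg hN, if_neg (by omega)]
      ring

lemma gapSum_nonneg (n N : ℕ) : 0 ≤ gapSum n N := by
  refine Finset.sum_nonneg fun m hm => ?_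
  rw [Finset.mem_Ioc] at hm
  unfold gap
  split_ifs
  · have h : (n : ℝ) < m := by exact_mod_cast hm.1
    rw [sub_nonneg]
    exact one_div_le_one_div_of_le (by linarith) (by linarith [Nat.cast_nonneg (α := ℝ) n])
  · exact le_rfl

lemma gapSum_le (n N : ℕ) (hn : n % 2 = 0) : gapSum n N ≤ oddHarm n := by
  rcases le_total n N with h | h
  · rw [gapSum_eq n N hn h]
    linarith [oddHarm_mono (Nat.sub_le (N + 1) n)]
  · simpa [gapSum, Finset.Ioc_eq_empty_of_le h] using oddHarm_nonneg n

lemma tendsto_oddInv : Tendsto oddInv atTop (nhds 0) :=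
  squeeze_zero oddInv_nonneg oddInv_le tendsto_one_div_atTop_nhds_zero_nat

lemma tendsto_oddHarm_shift (n : ℕ) :
    Tendsto (fun N => oddHarm (N + n) - oddHarm N) atTop (nhds 0) := by
  induction n with
  | zero => simp
  | succ n ih =>
    have h := ih.add (tendsto_oddInv.comp (tendsto_add_atTop_nat n))
    rw [add_zero] at h
    refine h.congr fun N => ?_
    rw [← add_assoc, oddHarm_succ]
    simp only [Function.comp]
    ring

lemma tendsto_gapSum (n : ℕ) (hn : n % 2 = 0) :
    Tendsto (gapSum n) atTop (nhds (oddHarm n)) := by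
  have h := (tendsto_oddHarm_shift n).const_sub (oddHarm n)
  rw [sub_zero] at h
  have h2 : Tendsto (fun N => N + 1 - n) atTop atTop :=
    (tendsto_sub_atTop_nat n).comp (tendsto_add_atTop_nat 1)
  refine (h.comp h2).congr' ?_
  filter_upwards [eventually_ge_atTop n] with N hN
  rw [gapSum_eq n N hn hN]
  simp only [Function.comp]
  rw [show N + 1 - n + n = N + 1 by omega]

lemma sum_gap_swap (u N : ℕ) :
    ∑ m ∈ Finset.Icc 1 N, ∑ n ∈ Finset.Ico 1 m, evenCoeff u n * gap n m
      = ∑' n, evenCoeff u n * gapSum n N := by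
  rw [tsum_eq_sum (s := Finset.Icc 1 N)]
  · simp only [gapSum, Finset.mul_sum]
    refine Finset.sum_comm' fun m n => ?_
    simp only [Finset.mem_Icc, Finset.mem_Ico, Finset.mem_Ioc]
    omega
  · intro n hn
    rw [Finset.mem_Icc] at hn
    rcases Nat.eq_zero_or_pos n with rfl | h
    · simp [evenCoeff, oddHarm]
    · rw [gapSum, Finset.Ioc_eq_empty_of_le (by omega)]
      simp

lemma tendsto_sum_gap {u : ℕ} (hu : 2 ≤ u) :
    Tendsto (fun N => ∑ m ∈ Finset.Icc 1 N, ∑ n ∈ Finset.Ico 1 m, evenCoeff u n * gap n m)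
      atTop (nhds (∑' n, evenSq u n)) := by
  simp only [sum_gap_swap]
  refine tendsto_tsum_of_dominated_convergence (summable_evenSq hu) (fun n => ?_)
    (Eventually.of_forall fun N n => ?_)
  · by_cases hn : n % 2 = 0
    · have h := (tendsto_gapSum n hn).const_mul (evenCoeff u n)
      convert h using 2
      rw [evenSq, evenCoeff, if_pos hn, if_pos hn]
      ring
    · simp [evenCoeff, evenSq, hn]
  · unfold evenCoeff evenSq
    by_cases hn : n % 2 = 0
    · have h0 := oddHarm_nonneg n
      have h1 := gapSum_nonneg n N
      rw [if_pos hn, if_pos hn, Real.norm_of_nonneg (by positivity), pow_two, ← mul_assoc]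
      exact mul_le_mul_of_nonneg_left (gapSum_le n N hn) (by positivity)
    · simp [hn]

lemma sum_tsum_tTerm {u : ℕ} (hu : 2 ≤ u) :
    ∑ a ∈ Finset.Icc 2 u, ∑' m, tTerm a (u + 1 - a) m
      = ∑' m, evenSq u m - ∑' m, oddNested u m := by
  have h1 : Tendsto (fun N => ∑ a ∈ Finset.Icc 2 u, ∑ m ∈ Finset.Icc 1 N, tTerm a (u + 1 - a) m)
      atTop (nhds (∑ a ∈ Finset.Icc 2 u, ∑' m, tTerm a (u + 1 - a) m)) := by
    refine tendsto_finsetSum _ fun a ha => ?_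
    rw [Finset.mem_Icc] at ha
    exact tendsto_sum_Icc (summable_tTerm ha.1 (by omega)) (by simp [tTerm])
  have h2 := (tendsto_sum_gap hu).sub (tendsto_sum_Icc (summable_oddNested hu) (by simp [oddNested]))
  refine tendsto_nhds_unique h1 (h2.congr fun N => ?_)
  rw [Finset.sum_comm, ← Finset.sum_sub_distrib]
  exact Finset.sum_congr rfl fun m _ => (left_side_term u m (by omega)).symm

lemma tValue3_eq_tsum {a b : ℕ} (ha : 2 ≤ a) (hb : 1 ≤ b) :
    tValue3 a b 1 = ∑' m, tTerm a b m :=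
  (tendsto_sum_Icc (summable_tTerm ha hb) (by simp [tTerm])).limUnder_eq

lemma tValue2_eq_tsum {u : ℕ} (hu : 2 ≤ u) : tValue2 u 2 = ∑' m, tTermTwo u m :=
  (tendsto_sum_Icc (summable_tTermTwo hu) (by simp [tTermTwo])).limUnder_eq

lemma eulerSum3_eq_tsum {u : ℕ} (hu : 2 ≤ u) {e₁ e₂ e₃ : ℝ}
    (h₁ : |e₁| = 1) (h₂ : |e₂| = 1) (h₃ : |e₃| = 1) :
    eulerSum3 u 1 1 e₁ e₂ e₃ = ∑' m, eulerTerm u e₁ e₂ e₃ m :=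
  (tendsto_sum_Icc (summable_eulerTerm hu h₁ h₂ h₃) (by simp [eulerTerm])).limUnder_eq

end TripleT

/-- For `w ≥ 4`, with `u = w − 2`:
`∑_{a+b=w−1, a≥2} T(a,b,1) = 2 T(u,2) + 4(ζ(u,1̄,1̄) + ζ(ū,1,1) − ζ(ū,1,1̄) − ζ(u,1̄,1))`. -/
theorem sum_triple_T_last1 (w : ℕ) (hw : 4 ≤ w) :
    ∑ a ∈ Finset.Icc 2 (w - 2), tValue3 a (w - 1 - a) 1
      = 2 * tValue2 (w - 2) 2
        + 4 * (eulerSum3 (w - 2) 1 1 1 (-1) (-1) + eulerSum3 (w - 2) 1 1 (-1) 1 1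
          - eulerSum3 (w - 2) 1 1 (-1) 1 (-1) - eulerSum3 (w - 2) 1 1 1 (-1) 1) := by
  obtain ⟨u, rfl⟩ : ∃ u, w = u + 2 := ⟨w - 2, by omega⟩
  have hu : 2 ≤ u := by omega
  simp only [Nat.add_sub_cancel, show u + 2 - 1 = u + 1 by omega]
  have hp : |(1 : ℝ)| = 1 := abs_one
  have hn : |(-1 : ℝ)| = 1 := by simp
  rw [TripleT.tValue2_eq_tsum hu, TripleT.eulerSum3_eq_tsum hu hp hn hn,
    TripleT.eulerSum3_eq_tsum hu hn hp hp, TripleT.eulerSum3_eq_tsum hu hn hp hn,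
    TripleT.eulerSum3_eq_tsum hu hp hn hp]
  have hL : ∑ a ∈ Finset.Icc 2 u, tValue3 a (u + 1 - a) 1
      = ∑ a ∈ Finset.Icc 2 u, ∑' m, TripleT.tTerm a (u + 1 - a) m := by
    refine Finset.sum_congr rfl fun a ha => ?_
    rw [Finset.mem_Icc] at ha
    exact TripleT.tValue3_eq_tsum ha.1 (by omega)
  rw [hL, TripleT.sum_tsum_tTerm hu,
    ← (TripleT.summable_evenSq hu).tsum_sub (TripleT.summable_oddNested hu)]
  simp only [← TripleT.right_side_term]
  have s0 := TripleT.summable_tTermTwo hu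
  have s1 := TripleT.summable_eulerTerm hu hp hn hn
  have s2 := TripleT.summable_eulerTerm hu hn hp hp
  have s3 := TripleT.summable_eulerTerm hu hn hp hn
  have s4 := TripleT.summable_eulerTerm hu hp hn hp
  exact ((s0.hasSum.mul_left 2).add
    ((((s1.hasSum.add s2.hasSum).sub s3.hasSum).sub s4.hasSum).mul_left 4)).tsum_eq
end
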